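/- arXiv:2004.07550 — 4 statements merged into one kernel-verified Lean document; each statement's English description precedes it below -/
import Mathlib

section
/- Let X ⊆ ℤ^n be a finite digital image with c1-adjacency, where n ≤ 3, whose cubical Euler characteristic χ̄(X) is nonzero, and let f : X → X be a c1-continuous self-map homotopic to the identity map of X. Then f has a fixed point or f has at least two distinct n-approximate fixed points. -/
/-- `c1`-adjacency on `ℤ^n`: `x, y` are `c1`-adjacent iff `∑ i, |x i − y i| = 1`. -/
def c1Adj {n : ℕ} (x y : Fin n → ℤ) : Prop := (∑ i, |x i - y i|) = 1

/-- `f` is `c1`-continuous on the digital image `X ⊆ ℤ^n`: `c1`-adjacent points of `X` have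
equal or `c1`-adjacent images. -/
def c1Cont {n m : ℕ} (X : Finset (Fin n → ℤ)) (f : (Fin n → ℤ) → (Fin m → ℤ)) : Prop :=
  ∀ x ∈ X, ∀ y ∈ X, c1Adj x y → f x = f y ∨ c1Adj (f x) (f y)

/-- `f` maps the digital image `X` into the digital image `Y`. -/
def MapsInto {n m : ℕ} (X : Finset (Fin n → ℤ)) (Y : Finset (Fin m → ℤ))
    (f : (Fin n → ℤ) → (Fin m → ℤ)) : Prop :=
  ∀ x ∈ X, f x ∈ Y

/-- The elementary cube `σ = t_1 × ⋯ × t_n ⊆ ℤ^n` with minimal corner `a`, where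
`t_i = {a i, a i + 1}` for `i ∈ D` (the nondegenerate directions, so `dim σ = D.card`)
and `t_i = {a i}` otherwise. -/
def eCube {n : ℕ} (a : Fin n → ℤ) (D : Finset (Fin n)) : Finset (Fin n → ℤ) :=
  D.powerset.image (fun s i => a i + if i ∈ s then 1 else 0)

/-- A homotopy between continuous maps `f, g : X → Y` is `H : X × {0,…,k} → Y` with
`H(x,0) = f(x)`, `H(x,k) = g(x)`, sending consecutive stages of each point to equal or
adjacent points, and continuous at each stage; `f ≃ g` iff such an `H` exists. -/
def c1Homotopic {n m : ℕ} (X : Finset (Fin n → ℤ)) (Y : Finset (Fin m → ℤ))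
    (f g : (Fin n → ℤ) → (Fin m → ℤ)) : Prop :=
  ∃ (k : ℕ) (H : (Fin n → ℤ) → ℕ → (Fin m → ℤ)),
    (∀ x ∈ X, ∀ t ≤ k, H x t ∈ Y) ∧
    (∀ x ∈ X, H x 0 = f x) ∧ (∀ x ∈ X, H x k = g x) ∧
    (∀ x ∈ X, ∀ t, t + 1 ≤ k → (H x t = H x (t + 1) ∨ c1Adj (H x t) (H x (t + 1)))) ∧
    (∀ t ≤ k, ∀ x ∈ X, ∀ x' ∈ X, c1Adj x x' → (H x t = H x' t ∨ c1Adj (H x t) (H x' t)))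

/-- `x` is a `k`-approximate fixed point of `f` on `X`: there is a `c1`-path in `X` from
`x` to `f x` of length at most `k`. -/
def nApproxFix {n : ℕ} (X : Finset (Fin n → ℤ)) (f : (Fin n → ℤ) → (Fin n → ℤ))
    (k : ℕ) (x : Fin n → ℤ) : Prop :=
  ∃ (m : ℕ) (p : ℕ → (Fin n → ℤ)), m ≤ k ∧ p 0 = x ∧ p m = f x ∧
    (∀ t ≤ m, p t ∈ X) ∧
    (∀ t, t + 1 ≤ m → (p t = p (t + 1) ∨ c1Adj (p t) (p (t + 1))))

open Classical in
/-- `ε(f, σ)` for `σ = eCube a D` with `f(σ) = σ`: on the nondegenerate directions `D` of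
`σ`, `f` is given by an affine map `x ↦ b + Mx` with `M` a signed permutation matrix
(a permutation `π` of `D` together with signs `s : D → {±1}`), and
`ε(f,σ) = det M = sgn(π) ⬝ ∏ s`. (Junk value `0` if `f` is not of this form on `σ`.) -/
noncomputable def cubeSign {n : ℕ} (f : (Fin n → ℤ) → (Fin n → ℤ))
    (a : Fin n → ℤ) (D : Finset (Fin n)) : ℤ :=
  if h : ∃ p : Equiv.Perm {i // i ∈ D} × ({i // i ∈ D} → ℤ),
      (∀ i, p.2 i = 1 ∨ p.2 i = -1) ∧
      ∀ x ∈ eCube a D, ∀ i : {i // i ∈ D},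
        f x (i : Fin n) = f a (i : Fin n) + p.2 i * (x ((p.1 i : Fin n)) - a ((p.1 i : Fin n)))
  then ((Equiv.Perm.sign h.choose.1 : ℤˣ) : ℤ) * ∏ i, h.choose.2 i
  else 0

open Classical in
/-- The cubical Lefschetz number `L̄(f) = ∑_σ (−1)^{dim σ} ε(f,σ)`, summing over all
elementary cubes `σ ⊆ X` with `f(σ) = σ`. -/
noncomputable def cubLef {n : ℕ} (X : Finset (Fin n → ℤ))
    (f : (Fin n → ℤ) → (Fin n → ℤ)) : ℤ :=
  ∑ a ∈ X, ∑ D : Finset (Fin n),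
    if eCube a D ⊆ X ∧ (eCube a D).image f = eCube a D then
      (-1 : ℤ) ^ D.card * cubeSign f a D
    else 0

open Classical in
/-- The cubical Euler characteristic `χ̄(X) = ∑_q (−1)^q k_q`, with `k_q` the number of
elementary cubes of dimension `q` contained in `X`. -/
noncomputable def cubEuler {n : ℕ} (X : Finset (Fin n → ℤ)) : ℤ :=
  ∑ a ∈ X, ∑ D : Finset (Fin n),
    if eCube a D ⊆ X then (-1 : ℤ) ^ D.card else 0


/-! Every map `g : ℤ^m → ℤ^n` pulls the elementary cochain dual to a cube of `ℤ^n` back to a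
cochain on `ℤ^m`: the dual cochain is a cup product of cochains in the separate coordinates, and
each factor can be pulled back along a coordinate function of `g`. This pullback commutes with the
coboundary, so it is dual to a chain map `g_#`. When `g` is `c1`-continuous, `g_# σ` is a multiple
of a single cube, whose points all lie in `g(σ)`.

A step from `f₀` to `f₁` of a homotopy inside `X` is a `c1`-continuous map on prisms `{0, 1} × σ`,
and its chain map is a chain homotopy on the chains of `X`. Hence the alternating trace of `f_#` is
a homotopy invariant, and for `f ≃ id` it equals `χ̄(X)`. If that is nonzero, some cube `p` of `X`
occurs in `f_# p`, which forces `f` to send two opposite vertices of `p` to opposite vertices of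
`p`. A `0`-dimensional `p` is a fixed point, and otherwise these two vertices are distinct and
joined to their images by paths inside `p`, changing one coordinate at a time. -/

namespace DigitalImage

variable {m n : ℕ}

/-- The index `(a, D)` of the elementary cube `eCube a D`. -/
abbrev Cube (n : ℕ) := (Fin n → ℤ) × Finset (Fin n)

/-- The facet of `p` orthogonal to the direction `i ∈ p.2`: the lower one for `ε = 0`, the upper
one for `ε = 1`. -/
def facet (ε : ℤ) (p : Cube n) (i : Fin n) : Cube n := (p.1 + Pi.single i ε, p.2.erase i)

/-- The cube having `p` as its facet `facet ε · j`, for a direction `j ∉ p.2`. -/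
def cofacet (ε : ℤ) (p : Cube n) (j : Fin n) : Cube n := (p.1 - Pi.single j ε, insert j p.2)

/-- The vertex of `p` opposite to its minimal corner `p.1`. -/
def top (p : Cube n) : Fin n → ℤ := fun i => p.1 i + if i ∈ p.2 then 1 else 0

lemma cofacet_facet {ε : ℤ} {p : Cube n} {i : Fin n} (hi : i ∈ p.2) :
    cofacet ε (facet ε p i) i = p := by
  simp [cofacet, facet, Finset.insert_erase hi]

lemma facet_cofacet {ε : ℤ} {p : Cube n} {j : Fin n} (hj : j ∉ p.2) :
    facet ε (cofacet ε p j) j = p := by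
  simp [cofacet, facet, Finset.erase_insert hj]

lemma mem_eCube {a y : Fin n → ℤ} {D : Finset (Fin n)} :
    y ∈ eCube a D ↔ ∀ j, y j = a j ∨ j ∈ D ∧ y j = a j + 1 := by
  simp only [eCube, Finset.mem_image, Finset.mem_powerset]
  constructor
  · rintro ⟨s, hs, rfl⟩ j
    by_cases hj : j ∈ s
    · exact .inr ⟨hs hj, by simp [hj]⟩
    · exact .inl (by simp [hj])
  · intro h
    refine ⟨D.filter fun j => y j ≠ a j, Finset.filter_subset _ _, funext fun j => ?_⟩
    rcases h j with hj | ⟨hD, hj⟩ <;> simp [*]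

lemma corner_mem_eCube (p : Cube n) : p.1 ∈ eCube p.1 p.2 :=
  mem_eCube.2 fun _ => .inl rfl

lemma top_mem_eCube (p : Cube n) : top p ∈ eCube p.1 p.2 :=
  mem_eCube.2 fun j => by by_cases hj : j ∈ p.2 <;> simp [top, hj]

lemma top_facet_one {p : Cube n} {i : Fin n} (hi : i ∈ p.2) : top (facet 1 p i) = top p := by
  funext j
  by_cases hj : j = i
  · subst hj; simp [top, facet, hi]
  · simp [top, facet, hj]

lemma eCube_facet_subset {ε : ℤ} (hε : ε = 0 ∨ ε = 1) {p : Cube n} {i : Fin n} (hi : i ∈ p.2) :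
    eCube (facet ε p i).1 (facet ε p i).2 ⊆ eCube p.1 p.2 := by
  intro y hy
  simp only [mem_eCube, facet, Pi.add_apply, Finset.mem_erase] at hy ⊢
  intro j
  by_cases hj : j = i
  · subst hj
    have := hy j
    simp only [Pi.single_eq_same] at this
    grind
  · simpa [hj] using hy j

lemma exists_mem_eCube_facet {p : Cube n} {y : Fin n → ℤ} (hy : y ∈ eCube p.1 p.2) {i : Fin n}
    (hi : i ∈ p.2) : ∃ ε : ℤ, (ε = 0 ∨ ε = 1) ∧ y ∈ eCube (facet ε p i).1 (facet ε p i).2 := by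
  rw [mem_eCube] at hy
  obtain ⟨ε, hε, hyi⟩ : ∃ ε : ℤ, (ε = 0 ∨ ε = 1) ∧ y i = p.1 i + ε := by
    rcases hy i with h | h
    · exact ⟨0, .inl rfl, by simp [h]⟩
    · exact ⟨1, .inr rfl, h.2⟩
  refine ⟨ε, hε, mem_eCube.2 fun j => ?_⟩
  by_cases hj : j = i
  · subst hj; simp [facet, hyi]
  · simpa [facet, hj] using hy j

/-- The cubes contained in `X`. -/
def cubes (X : Finset (Fin n → ℤ)) : Finset (Cube n) :=
  (X ×ˢ Finset.univ).filter fun p => eCube p.1 p.2 ⊆ X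

lemma mem_cubes {X : Finset (Fin n → ℤ)} {p : Cube n} : p ∈ cubes X ↔ eCube p.1 p.2 ⊆ X := by
  simpa [cubes] using fun h => h (corner_mem_eCube p)

lemma facet_mem_cubes {X : Finset (Fin n → ℤ)} {ε : ℤ} (hε : ε = 0 ∨ ε = 1) {p : Cube n}
    (hp : p ∈ cubes X) {i : Fin n} (hi : i ∈ p.2) : facet ε p i ∈ cubes X :=
  mem_cubes.2 ((eCube_facet_subset hε hi).trans (mem_cubes.1 hp))

lemma cubEuler_eq_sum_cubes (X : Finset (Fin n → ℤ)) :
    cubEuler X = ∑ p ∈ cubes X, (-1 : ℤ) ^ p.2.card := by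
  rw [cubes, Finset.sum_filter, Finset.sum_product, cubEuler]

section Slices

/-- The cube `{t} × p` of `ℤ^(n+1)`. -/
def slice (t : ℤ) (p : Cube n) : Cube (n + 1) := (Fin.cons t p.1, p.2.map (Fin.succEmb n))

/-- The cube `{t, t + 1} × p` of `ℤ^(n+1)`. -/
def prism (t : ℤ) (p : Cube n) : Cube (n + 1) :=
  (Fin.cons t p.1, insert 0 (p.2.map (Fin.succEmb n)))

/-- The projection of a cube of `ℤ^(n+1)` along the first coordinate. -/
def base (p : Cube (n + 1)) : Cube n := (Fin.tail p.1, Finset.univ.filter fun j => j.succ ∈ p.2)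

lemma zero_notMem_slice (t : ℤ) (p : Cube n) : (0 : Fin (n + 1)) ∉ (slice t p).2 := by
  simp [slice]

lemma zero_mem_prism (t : ℤ) (p : Cube n) : (0 : Fin (n + 1)) ∈ (prism t p).2 := by
  simp [prism]

lemma succ_mem_slice {t : ℤ} {p : Cube n} {j : Fin n} : j.succ ∈ (slice t p).2 ↔ j ∈ p.2 := by
  simp [slice]

lemma succ_mem_prism {t : ℤ} {p : Cube n} {j : Fin n} : j.succ ∈ (prism t p).2 ↔ j ∈ p.2 := by
  simp [prism]

lemma base_slice (t : ℤ) (p : Cube n) : base (slice t p) = p := by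
  simp [base, slice]

lemma base_prism (t : ℤ) (p : Cube n) : base (prism t p) = p := by
  simp [base, prism]

lemma eq_slice_or_eq_prism (p : Cube (n + 1)) :
    p = slice (p.1 0) (base p) ∨ p = prism (p.1 0) (base p) := by
  by_cases h : 0 ∈ p.2
  · refine .inr (Prod.ext (Fin.cons_self_tail p.1).symm (Finset.ext (Fin.cases ?_ fun j => ?_)))
    · simp [h, zero_mem_prism]
    · simp [succ_mem_prism, base]
  · refine .inl (Prod.ext (Fin.cons_self_tail p.1).symm (Finset.ext (Fin.cases ?_ fun j => ?_)))
    · simp [h, zero_notMem_slice]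
    · simp [succ_mem_slice, base]

lemma slice_prism_cases {motive : Cube (n + 1) → Prop} (p : Cube (n + 1))
    (slice : ∀ t q, motive (slice t q)) (prism : ∀ t q, motive (prism t q)) : motive p := by
  rcases eq_slice_or_eq_prism p with h | h <;> rw [h]
  · exact slice _ _
  · exact prism _ _

lemma facet_slice_succ (ε t : ℤ) (p : Cube n) (i : Fin n) :
    facet ε (slice t p) i.succ = slice t (facet ε p i) := by
  refine Prod.ext (funext (Fin.cases ?_ fun j => ?_)) (Finset.ext (Fin.cases ?_ fun j => ?_))
  all_goals simp [facet, slice, Pi.single_apply, (Fin.succ_ne_zero _).symm]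

lemma facet_prism_succ (ε t : ℤ) (p : Cube n) (i : Fin n) :
    facet ε (prism t p) i.succ = prism t (facet ε p i) := by
  refine Prod.ext (funext (Fin.cases ?_ fun j => ?_)) (Finset.ext (Fin.cases ?_ fun j => ?_))
  all_goals simp [facet, prism, Pi.single_apply, (Fin.succ_ne_zero _).symm]

lemma facet_prism_zero (ε t : ℤ) (p : Cube n) : facet ε (prism t p) 0 = slice (t + ε) p := by
  refine Prod.ext (funext (Fin.cases ?_ fun j => ?_)) (Finset.ext (Fin.cases ?_ fun j => ?_))
  all_goals simp [facet, prism, slice]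

lemma cofacet_slice_succ (ε t : ℤ) (p : Cube n) (j : Fin n) :
    cofacet ε (slice t p) j.succ = slice t (cofacet ε p j) := by
  refine Prod.ext (funext (Fin.cases ?_ fun k => ?_)) (Finset.ext (Fin.cases ?_ fun k => ?_))
  all_goals simp [cofacet, slice, Pi.single_apply, (Fin.succ_ne_zero _).symm]

lemma cofacet_prism_succ (ε t : ℤ) (p : Cube n) (j : Fin n) :
    cofacet ε (prism t p) j.succ = prism t (cofacet ε p j) := by
  refine Prod.ext (funext (Fin.cases ?_ fun k => ?_)) (Finset.ext (Fin.cases ?_ fun k => ?_))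
  all_goals simp [cofacet, prism, Pi.single_apply, (Fin.succ_ne_zero _).symm]

lemma cofacet_slice_zero (ε t : ℤ) (p : Cube n) : cofacet ε (slice t p) 0 = prism (t - ε) p := by
  refine Prod.ext (funext (Fin.cases ?_ fun k => ?_)) (Finset.ext (Fin.cases ?_ fun k => ?_))
  all_goals simp [cofacet, prism, slice]

lemma mem_eCube_prism {t : ℤ} {p : Cube n} {y : Fin (n + 1) → ℤ} :
    y ∈ eCube (prism t p).1 (prism t p).2 ↔
      (y 0 = t ∨ y 0 = t + 1) ∧ Fin.tail y ∈ eCube p.1 p.2 := by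
  simp [mem_eCube, Fin.forall_fin_succ, prism, Fin.tail]

end Slices

section Complex

/-- The sign `(-1)^k`, where `k` is the position of the direction `i` relative to `D`. -/
def dirSign (i : Fin n) (D : Finset (Fin n)) : ℤ := (-1) ^ (D.filter (· < i)).card

lemma dirSign_ne_zero (i : Fin n) (D : Finset (Fin n)) : dirSign i D ≠ 0 :=
  pow_ne_zero _ (by norm_num)

lemma dirSign_zero (D : Finset (Fin (n + 1))) : dirSign 0 D = 1 := by
  simp [dirSign]

lemma dirSign_cofacet (ε : ℤ) (p : Cube n) (j : Fin n) :
    dirSign j (cofacet ε p j).2 = dirSign j p.2 := by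
  simp [dirSign, cofacet, Finset.filter_insert]

lemma dirSign_slice (t : ℤ) (p : Cube n) (i : Fin n) :
    dirSign i.succ (slice t p).2 = dirSign i p.2 := by
  simp [dirSign, slice, Finset.filter_map, Function.comp_def]

lemma dirSign_prism (t : ℤ) (p : Cube n) (i : Fin n) :
    dirSign i.succ (prism t p).2 = -dirSign i p.2 := by
  simp [dirSign, prism, Finset.filter_insert, Finset.filter_map, Function.comp_def, pow_succ]

/-- Integral cubical cochains on the lattice `ℤ^m`. -/
abbrev Cochain (m : ℕ) := Cube m → ℤ

/-- The cubical coboundary. -/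
def coboundary : Cochain m →ₗ[ℤ] Cochain m where
  toFun ω p := ∑ i ∈ p.2, dirSign i p.2 * (ω (facet 1 p i) - ω (facet 0 p i))
  map_add' ω η := by
    funext p
    simp only [Pi.add_apply, ← Finset.sum_add_distrib]
    exact Finset.sum_congr rfl fun i _ => by ring
  map_smul' c ω := by
    funext p
    simp only [Pi.smul_apply, smul_eq_mul, Finset.mul_sum, RingHom.id_apply]
    exact Finset.sum_congr rfl fun i _ => by ring

lemma coboundary_apply (ω : Cochain m) (p : Cube m) :
    coboundary ω p = ∑ i ∈ p.2, dirSign i p.2 * (ω (facet 1 p i) - ω (facet 0 p i)) := rfl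

lemma coboundary_slice (ω : Cochain (m + 1)) (t : ℤ) (p : Cube m) :
    coboundary ω (slice t p) = coboundary (fun q => ω (slice t q)) p := by
  have hsum : ∀ F : Fin (m + 1) → ℤ, ∑ i ∈ (slice t p).2, F i = ∑ i ∈ p.2, F i.succ :=
    fun F => by simp [slice]
  simp only [coboundary_apply, hsum, facet_slice_succ, dirSign_slice]

lemma coboundary_prism (ω : Cochain (m + 1)) (t : ℤ) (p : Cube m) :
    coboundary ω (prism t p) = ω (slice (t + 1) p) - ω (slice t p) -
      coboundary (fun q => ω (prism t q)) p := by
  have hsum : ∀ F : Fin (m + 1) → ℤ, ∑ i ∈ (prism t p).2, F i = F 0 + ∑ i ∈ p.2, F i.succ :=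
    fun F => by simp [prism]
  simp only [coboundary_apply, hsum, facet_prism_zero, facet_prism_succ, dirSign_zero,
    dirSign_prism, one_mul, add_zero, neg_mul, Finset.sum_neg_distrib, sub_eq_add_neg]

lemma coboundary_coboundary (ω : Cochain m) : coboundary (coboundary ω) = 0 := by
  funext p
  induction m with
  | zero => simp [coboundary_apply, Finset.eq_empty_of_isEmpty p.2]
  | succ m ih =>
    induction p using slice_prism_cases with
    | slice t q =>
      simp only [coboundary_slice]
      exact ih _ q
    | prism t q =>
      have hprism : (fun r => coboundary ω (prism t r)) =
          (fun r => ω (slice (t + 1) r)) - (fun r => ω (slice t r)) -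
            coboundary (fun r => ω (prism t r)) :=
        funext fun r => coboundary_prism ω t r
      rw [coboundary_prism, hprism, map_sub, map_sub, coboundary_slice, coboundary_slice]
      simp [ih]

/-- The boundary of a cubical chain `∑ p, c p • p`, which may be infinite and have coefficients in
any abelian group, as the function of its coefficients. -/
def boundary {M : Type*} [AddCommGroup M] (c : Cube n → M) (p : Cube n) : M :=
  ∑ j ∈ p.2ᶜ, dirSign j p.2 • (c (cofacet 1 p j) - c (cofacet 0 p j))

lemma map_boundary {M N F : Type*} [AddCommGroup M] [AddCommGroup N] [FunLike F M N]
    [AddMonoidHomClass F M N] (φ : F) (c : Cube n → M) (p : Cube n) :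
    φ (boundary c p) = boundary (fun q => φ (c q)) p := by
  simp only [boundary, map_sum, map_zsmul, map_sub]

lemma boundary_slice {M : Type*} [AddCommGroup M] (c : Cube (n + 1) → M) (t : ℤ) (p : Cube n) :
    boundary c (slice t p) = c (prism (t - 1) p) - c (prism t p) +
      boundary (fun q => c (slice t q)) p := by
  have hcompl : (slice t p).2ᶜ = insert 0 (p.2ᶜ.map (Fin.succEmb n)) :=
    Finset.ext (Fin.cases (by simp [slice]) fun j => by simp [slice])
  rw [boundary, hcompl, Finset.sum_insert (by simp), Finset.sum_map]
  simp only [Fin.coe_succEmb, cofacet_slice_zero, cofacet_slice_succ, dirSign_zero,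
    dirSign_slice, one_smul, sub_zero, boundary]

lemma boundary_prism {M : Type*} [AddCommGroup M] (c : Cube (n + 1) → M) (t : ℤ) (p : Cube n) :
    boundary c (prism t p) = -boundary (fun q => c (prism t q)) p := by
  have hcompl : (prism t p).2ᶜ = p.2ᶜ.map (Fin.succEmb n) :=
    Finset.ext (Fin.cases (by simp [prism]) fun j => by simp [prism])
  rw [boundary, hcompl, Finset.sum_map]
  simp only [Fin.coe_succEmb, cofacet_prism_succ, dirSign_prism, neg_smul,
    Finset.sum_neg_distrib, boundary]

lemma boundary_facet_ne_zero {c : Cube n → ℤ} {p : Cube n} (hp : c p ≠ 0)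
    (hc : ∀ q, c q ≠ 0 → q = p) {ε : ℤ} (hε : ε = 0 ∨ ε = 1) {j : Fin n} (hj : j ∈ p.2) :
    boundary c (facet ε p j) ≠ 0 := by
  have hother : ∀ k ∈ (facet ε p j).2ᶜ, k ≠ j → ∀ δ, c (cofacet δ (facet ε p j) k) = 0 := by
    intro k _ hkj δ
    by_contra h
    have hdirs : (cofacet δ (facet ε p j) k).2 = p.2 := congrArg Prod.snd (hc _ h)
    rw [← hdirs] at hj
    simp [cofacet, facet, hkj.symm] at hj
  have hopposite : c (cofacet (1 - ε) (facet ε p j) j) = 0 := by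
    by_contra h
    have := congrFun (congrArg Prod.fst (hc _ h)) j
    simp only [cofacet, facet, Pi.sub_apply, Pi.add_apply, Pi.single_eq_same] at this
    omega
  rw [boundary, Finset.sum_eq_single_of_mem j (by simp [facet])
    fun k hk hkj => by simp [hother k hk hkj]]
  refine smul_ne_zero (dirSign_ne_zero _ _) ?_
  rcases hε with rfl | rfl
  · rw [sub_zero] at hopposite
    simpa [hopposite, cofacet_facet hj] using hp
  · rw [sub_self] at hopposite
    simpa [hopposite, cofacet_facet hj] using hp

lemma sum_facet_eq_sum_cofacet {K : Finset (Cube n)} {ε : ℤ}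
    (hK : ∀ p ∈ K, ∀ i ∈ p.2, facet ε p i ∈ K) {F : Cube n → Cube n → Fin n → ℤ}
    (hF : ∀ q ∈ K, ∀ p j, F q p j ≠ 0 → p ∈ K) :
    ∑ p ∈ K, ∑ i ∈ p.2, F (facet ε p i) p i =
      ∑ q ∈ K, ∑ j ∈ q.2ᶜ, F q (cofacet ε q j) j := by
  rw [Finset.sum_sigma', Finset.sum_sigma',
    ← Finset.sum_filter_of_ne (s := K.sigma fun q => q.2ᶜ) (p := fun s => cofacet ε s.1 s.2 ∈ K)
      fun s hs h => hF _ (Finset.mem_sigma.1 hs).1 _ _ h]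
  refine Finset.sum_nbij' (fun s => ⟨facet ε s.1 s.2, s.2⟩) (fun s => ⟨cofacet ε s.1 s.2, s.2⟩)
    ?_ ?_ ?_ ?_ ?_
  · rintro ⟨p, i⟩ h
    rw [Finset.mem_sigma] at h
    have hi : i ∉ (facet ε p i).2 := Finset.notMem_erase i p.2
    simp [cofacet_facet h.2, h.1, hK p h.1 i h.2, hi]
  · rintro ⟨q, j⟩ h
    rw [Finset.mem_filter] at h
    simpa [cofacet] using h.2
  · rintro ⟨p, i⟩ h
    simp [cofacet_facet (Finset.mem_sigma.1 h).2]
  · rintro ⟨q, j⟩ h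
    rw [Finset.mem_filter, Finset.mem_sigma, Finset.mem_compl] at h
    simp [facet_cofacet h.1.2]
  · rintro ⟨p, i⟩ h
    simp [cofacet_facet (Finset.mem_sigma.1 h).2]

-- The supertrace of the graded commutator `∂P + P∂` vanishes.
lemma sum_neg_one_pow_mul_coboundary_add_boundary {K : Finset (Cube n)}
    (hK : ∀ ε : ℤ, ε = 0 ∨ ε = 1 → ∀ p ∈ K, ∀ i ∈ p.2, facet ε p i ∈ K)
    {P : Cube n → Cube n → ℤ} (hP : ∀ q ∈ K, ∀ p, P q p ≠ 0 → p ∈ K) :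
    ∑ p ∈ K, (-1) ^ p.2.card * (coboundary (fun q => P q p) p + boundary (P p) p) = 0 := by
  have hexchange : ∀ ε : ℤ, ε = 0 ∨ ε = 1 →
      ∑ p ∈ K, ∑ i ∈ p.2, (-1) ^ p.2.card * (dirSign i p.2 * P (facet ε p i) p) =
      -∑ q ∈ K, ∑ j ∈ q.2ᶜ, (-1) ^ q.2.card * (dirSign j q.2 * P q (cofacet ε q j)) := by
    intro ε hε
    rw [sum_facet_eq_sum_cofacet (hK ε hε)
      (F := fun q p i => (-1) ^ p.2.card * (dirSign i p.2 * P q p))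
      fun q hq p j h => hP q hq p (right_ne_zero_of_mul (right_ne_zero_of_mul h))]
    simp only [← Finset.sum_neg_distrib]
    refine Finset.sum_congr rfl fun q _ => Finset.sum_congr rfl fun j hj => ?_
    have hcard : (cofacet ε q j).2.card = q.2.card + 1 :=
      Finset.card_insert_of_notMem (Finset.mem_compl.1 hj)
    rw [dirSign_cofacet, hcard, pow_succ]
    ring
  have h₀ := hexchange 0 (.inl rfl)
  have h₁ := hexchange 1 (.inr rfl)
  simp only [coboundary_apply, boundary, smul_eq_mul, mul_add, mul_sub, Finset.mul_sum,
    Finset.sum_add_distrib, Finset.sum_sub_distrib]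
  linarith

end Complex

section Pullback

/-- The cup product of the `0`-cochain `u` with a cochain. -/
def cup (u : (Fin m → ℤ) → ℤ) : Cochain m →ₗ[ℤ] Cochain m :=
  LinearMap.mulLeft ℤ fun p => u p.1

/-- The cup product of the `1`-cochain `du` with a cochain, as given by the Leibniz rule
`d (u ⌣ ω) = du ⌣ ω + u ⌣ dω`. -/
def cupCoboundary (u : (Fin m → ℤ) → ℤ) : Cochain m →ₗ[ℤ] Cochain m :=
  coboundary ∘ₗ cup u - cup u ∘ₗ coboundary

lemma cup_apply (u : (Fin m → ℤ) → ℤ) (ω : Cochain m) (p : Cube m) :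
    cup u ω p = u p.1 * ω p := rfl

lemma cupCoboundary_eq_sub (u : (Fin m → ℤ) → ℤ) (ω : Cochain m) :
    cupCoboundary u ω = coboundary (cup u ω) - cup u (coboundary ω) := rfl

lemma cupCoboundary_apply (u : (Fin m → ℤ) → ℤ) (ω : Cochain m) (p : Cube m) :
    cupCoboundary u ω p =
      ∑ i ∈ p.2, dirSign i p.2 * (u (p.1 + Pi.single i 1) - u p.1) * ω (facet 1 p i) := by
  rw [cupCoboundary_eq_sub, Pi.sub_apply, cup_apply, coboundary_apply, coboundary_apply,
    Finset.mul_sum, ← Finset.sum_sub_distrib]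
  refine Finset.sum_congr rfl fun i _ => ?_
  simp only [cup_apply, facet, Pi.single_zero, add_zero]
  ring

lemma coboundary_cup (u : (Fin m → ℤ) → ℤ) (ω : Cochain m) :
    coboundary (cup u ω) = cupCoboundary u ω + cup u (coboundary ω) := by
  simp [cupCoboundary_eq_sub]

lemma coboundary_cupCoboundary (u : (Fin m → ℤ) → ℤ) (ω : Cochain m) :
    coboundary (cupCoboundary u ω) = -cupCoboundary u (coboundary ω) := by
  simp [cupCoboundary_eq_sub, coboundary_coboundary]

lemma cupCoboundary_slice (u : (Fin (m + 1) → ℤ) → ℤ) (ω : Cochain (m + 1)) (t : ℤ) (p : Cube m) :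
    cupCoboundary u ω (slice t p) =
      cupCoboundary (fun x => u (Fin.cons t x)) (fun q => ω (slice t q)) p := by
  simp only [cupCoboundary_eq_sub, Pi.sub_apply, cup_apply, coboundary_slice]
  rfl

lemma cupCoboundary_prism (u : (Fin (m + 1) → ℤ) → ℤ) (ω : Cochain (m + 1)) (t : ℤ) (p : Cube m) :
    cupCoboundary u ω (prism t p) =
      (u (Fin.cons (t + 1) p.1) - u (Fin.cons t p.1)) * ω (slice (t + 1) p) -
        cupCoboundary (fun x => u (Fin.cons t x)) (fun q => ω (prism t q)) p := by
  have hcup : coboundary (cup u ω) (prism t p) =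
      u (Fin.cons (t + 1) p.1) * ω (slice (t + 1) p) - u (Fin.cons t p.1) * ω (slice t p) -
        coboundary (cup (fun x => u (Fin.cons t x)) fun q => ω (prism t q)) p :=
    coboundary_prism _ _ _
  have hcorner : (prism t p).1 = Fin.cons t p.1 := rfl
  simp only [cupCoboundary_eq_sub, Pi.sub_apply, cup_apply, coboundary_prism, hcup, hcorner]
  ring

lemma cupCoboundary_const (c : ℤ) (ω : Cochain m) : cupCoboundary (fun _ => c) ω = 0 := by
  funext p
  simp [cupCoboundary_apply]

/-- The indicator function of the level set `{h = c}`. -/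
def levelIndicator (h : (Fin m → ℤ) → ℤ) (c : ℤ) (x : Fin m → ℤ) : ℤ := if h x = c then 1 else 0

/-- The indicator function of the superlevel set `{h > c}`. Its coboundary is the pullback along `h`
of the `1`-cochain dual to the edge `{c, c + 1}` of `ℤ`. -/
def aboveIndicator (h : (Fin m → ℤ) → ℤ) (c : ℤ) (x : Fin m → ℤ) : ℤ := if c < h x then 1 else 0

lemma cupCoboundary_levelIndicator (h : (Fin m → ℤ) → ℤ) (c : ℤ) (ω : Cochain m) :
    cupCoboundary (levelIndicator h c) ω =
      cupCoboundary (aboveIndicator h (c - 1)) ω - cupCoboundary (aboveIndicator h c) ω := by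
  have hlevel : ∀ x, levelIndicator h c x = aboveIndicator h (c - 1) x - aboveIndicator h c x := by
    intro x
    unfold levelIndicator aboveIndicator
    split_ifs <;> omega
  funext p
  simp only [Pi.sub_apply, cupCoboundary_apply, hlevel, ← Finset.sum_sub_distrib]
  exact Finset.sum_congr rfl fun i _ => by ring

/-- The pullback along `g : ℤ^m → ℤ^n` of the elementary cochain dual to a cube `τ` of `ℤ^n`. The
dual cochain is a cup product over the coordinates of `ℤ^n`, with a factor of degree one for each
direction of `τ`, and the pullback is the cup product of the pullbacks of the factors.
Equivalently, `pullback g τ σ` is the coefficient of `τ` in the chain `g_# σ`. -/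
def pullback : {n : ℕ} → ((Fin m → ℤ) → Fin n → ℤ) → Cube n → Cochain m
  | 0, _, _ => fun σ => if σ.2 = ∅ then 1 else 0
  | _ + 1, g, τ =>
    if 0 ∈ τ.2 then
      cupCoboundary (aboveIndicator (fun x => g x 0) (τ.1 0))
        (pullback (fun x => Fin.tail (g x)) (base τ))
    else
      cup (levelIndicator (fun x => g x 0) (τ.1 0)) (pullback (fun x => Fin.tail (g x)) (base τ))

lemma pullback_zero_dim (g : (Fin m → ℤ) → Fin 0 → ℤ) (τ : Cube 0) (σ : Cube m) :
    pullback g τ σ = if σ.2 = ∅ then 1 else 0 := rfl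

lemma pullback_to_slice (g : (Fin m → ℤ) → Fin (n + 1) → ℤ) (t : ℤ) (q : Cube n) :
    pullback g (slice t q) =
      cup (levelIndicator (fun x => g x 0) t) (pullback (fun x => Fin.tail (g x)) q) := by
  rw [pullback, if_neg (zero_notMem_slice t q), base_slice]
  rfl

lemma pullback_to_prism (g : (Fin m → ℤ) → Fin (n + 1) → ℤ) (t : ℤ) (q : Cube n) :
    pullback g (prism t q) =
      cupCoboundary (aboveIndicator (fun x => g x 0) t) (pullback (fun x => Fin.tail (g x)) q) := by
  rw [pullback, if_pos (zero_mem_prism t q), base_prism]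
  rfl

theorem coboundary_pullback (g : (Fin m → ℤ) → Fin n → ℤ) (τ : Cube n) :
    coboundary (pullback g τ) = boundary (pullback g) τ := by
  induction n with
  | zero =>
    funext σ
    simp [coboundary_apply, pullback_zero_dim, boundary, facet]
  | succ n ih =>
    induction τ using slice_prism_cases with
    | slice t q =>
      simp only [boundary_slice, pullback_to_slice, pullback_to_prism, coboundary_cup,
        cupCoboundary_levelIndicator, ih, map_boundary]
    | prism t q =>
      simp only [boundary_prism, pullback_to_prism, coboundary_cupCoboundary, ih, map_boundary]

lemma coboundary_pullback_apply (g : (Fin m → ℤ) → Fin n → ℤ) (τ : Cube n) (σ : Cube m) :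
    coboundary (pullback g τ) σ = boundary (fun ρ => pullback g ρ σ) τ := by
  rw [coboundary_pullback]
  exact map_boundary (Pi.evalAddMonoidHom _ σ) _ _

lemma pullback_slice (g : (Fin (m + 1) → ℤ) → Fin n → ℤ) (τ : Cube n) (t : ℤ) (σ : Cube m) :
    pullback g τ (slice t σ) = pullback (fun x => g (Fin.cons t x)) τ σ := by
  induction n generalizing σ with
  | zero => simp [pullback_zero_dim, slice]
  | succ n ih =>
    induction τ using slice_prism_cases with
    | slice s q =>
      rw [pullback_to_slice, pullback_to_slice, cup_apply, cup_apply, ih]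
      rfl
    | prism s q =>
      simp only [pullback_to_prism, cupCoboundary_slice, ih]
      rfl

lemma pullback_congr {f g : (Fin m → ℤ) → Fin n → ℤ} {τ : Cube n} {σ : Cube m}
    (h : ∀ x ∈ eCube σ.1 σ.2, f x = g x) : pullback f τ σ = pullback g τ σ := by
  induction n generalizing σ with
  | zero => rfl
  | succ n ih =>
    have htail : ∀ x ∈ eCube σ.1 σ.2, Fin.tail (f x) = Fin.tail (g x) :=
      fun x hx => congrArg Fin.tail (h x hx)
    have hcorner := h _ (corner_mem_eCube σ)
    induction τ using slice_prism_cases with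
    | slice t q =>
      rw [pullback_to_slice, pullback_to_slice, cup_apply, cup_apply, ih htail, levelIndicator,
        levelIndicator, hcorner]
    | prism t q =>
      rw [pullback_to_prism, pullback_to_prism, cupCoboundary_apply, cupCoboundary_apply]
      refine Finset.sum_congr rfl fun i hi => ?_
      have hfacet := eCube_facet_subset (ε := 1) (.inr rfl) hi
      have hstep : f (σ.1 + Pi.single i 1) = g (σ.1 + Pi.single i 1) :=
        h _ (hfacet (corner_mem_eCube _))
      rw [ih fun x hx => htail x (hfacet hx)]
      simp only [aboveIndicator, hcorner, hstep]

lemma pullback_id_self (p : Cube n) : pullback id p p = 1 := by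
  induction n with
  | zero => simp [pullback_zero_dim, Finset.eq_empty_of_isEmpty p.2]
  | succ n ih =>
    have hslice (t : ℤ) (q : Cube n) :
        pullback (fun x : Fin (n + 1) → ℤ => Fin.tail (id x)) q (slice t q) = 1 := by
      rw [pullback_slice]
      exact ih q
    induction p using slice_prism_cases with
    | slice t q =>
      rw [pullback_to_slice, cup_apply, hslice]
      simp [levelIndicator, slice]
    | prism t q =>
      rw [pullback_to_prism, cupCoboundary_prism, hslice]
      simp [aboveIndicator, cupCoboundary_const]

end Pullback

section Support

lemma c1Adj_add_single (x : Fin n → ℤ) (i : Fin n) : c1Adj x (x + Pi.single i 1) := by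
  rw [c1Adj, Finset.sum_eq_single_of_mem i (Finset.mem_univ i)] <;> simp +contextual

lemma c1Adj_succ_iff {x y : Fin (n + 1) → ℤ} :
    c1Adj x y ↔ |x 0 - y 0| = 1 ∧ Fin.tail x = Fin.tail y ∨
      x 0 = y 0 ∧ c1Adj (Fin.tail x) (Fin.tail y) := by
  have htail : Fin.tail x = Fin.tail y ↔ ∑ i : Fin n, |x i.succ - y i.succ| = 0 := by
    rw [Finset.sum_eq_zero_iff_of_nonneg fun _ _ => abs_nonneg _]
    simp [funext_iff, Fin.tail, sub_eq_zero]
  have hnonneg : 0 ≤ ∑ i : Fin n, |x i.succ - y i.succ| :=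
    Finset.sum_nonneg fun _ _ => abs_nonneg _
  rw [htail, c1Adj, c1Adj, Fin.sum_univ_succ]
  simp only [Fin.tail]
  grind

lemma _root_.c1Cont.mono {X Y : Finset (Fin m → ℤ)} {f : (Fin m → ℤ) → Fin n → ℤ}
    (hf : c1Cont Y f) (h : X ⊆ Y) : c1Cont X f :=
  fun x hx y hy => hf x (h hx) y (h hy)

lemma _root_.c1Cont.tail {X : Finset (Fin m → ℤ)} {f : (Fin m → ℤ) → Fin (n + 1) → ℤ}
    (hf : c1Cont X f) : c1Cont X fun x => Fin.tail (f x) := by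
  intro x hx y hy hxy
  rcases hf x hx y hy hxy with h | h
  · exact .inl (congrArg Fin.tail h)
  · exact (c1Adj_succ_iff.1 h).imp And.right And.right

/-- `v` and `w` are opposite vertices of the cube `p`. -/
def Antipodal (p : Cube n) (v w : Fin n → ℤ) : Prop :=
  v ∈ eCube p.1 p.2 ∧ w ∈ eCube p.1 p.2 ∧ ∀ j ∈ p.2, v j ≠ w j

lemma antipodal_iff {p : Cube n} {v w : Fin n → ℤ} :
    Antipodal p v w ↔ ∀ j, v j = p.1 j ∧ (w j = p.1 j ∧ j ∉ p.2 ∨ w j = p.1 j + 1 ∧ j ∈ p.2) ∨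
      v j = p.1 j + 1 ∧ w j = p.1 j ∧ j ∈ p.2 := by
  simp only [Antipodal, mem_eCube, ← forall_and]
  refine forall_congr' fun j => ?_
  grind

lemma antipodal_slice {t : ℤ} {p : Cube n} {v w : Fin (n + 1) → ℤ} :
    Antipodal (slice t p) v w ↔
      (v 0 = t ∧ w 0 = t) ∧ Antipodal p (Fin.tail v) (Fin.tail w) := by
  simp [antipodal_iff, Fin.forall_fin_succ, slice, Fin.tail]

lemma antipodal_prism {t : ℤ} {p : Cube n} {v w : Fin (n + 1) → ℤ} :
    Antipodal (prism t p) v w ↔ (v 0 = t ∧ w 0 = t + 1 ∨ v 0 = t + 1 ∧ w 0 = t) ∧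
      Antipodal p (Fin.tail v) (Fin.tail w) := by
  simp [antipodal_iff, Fin.forall_fin_succ, prism, Fin.tail]

lemma Antipodal.unique {p q : Cube n} {v w : Fin n → ℤ} (hp : Antipodal p v w)
    (hq : Antipodal q v w) : p = q := by
  rw [antipodal_iff] at hp hq
  have h (j : Fin n) : p.1 j = q.1 j ∧ (j ∈ p.2 ↔ j ∈ q.2) := by
    have := hp j
    have := hq j
    grind
  exact Prod.ext (funext fun j => (h j).1) (Finset.ext fun j => (h j).2)

-- A nonzero coefficient comes from a monotone path from `σ.1` to `top σ` along every edge of which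
-- `g` moves.
lemma apply_corner_eq_apply_top {α : Type*} {h : (Fin m → ℤ) → α}
    {g : (Fin m → ℤ) → Fin n → ℤ} {τ : Cube n} {σ : Cube m} (hσ : pullback g τ σ ≠ 0)
    (hgh : ∀ x ∈ eCube σ.1 σ.2, ∀ i, x + Pi.single i 1 ∈ eCube σ.1 σ.2 →
      g x ≠ g (x + Pi.single i 1) → h x = h (x + Pi.single i 1)) :
    h σ.1 = h (top σ) := by
  induction n generalizing σ with
  | zero =>
    have hdim : σ.2 = ∅ := by simpa [pullback_zero_dim] using hσ
    exact congrArg h (funext fun j => by simp [top, hdim])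
  | succ n ih =>
    have htail : ∀ x ∈ eCube σ.1 σ.2, ∀ i, x + Pi.single i 1 ∈ eCube σ.1 σ.2 →
        Fin.tail (g x) ≠ Fin.tail (g (x + Pi.single i 1)) → h x = h (x + Pi.single i 1) :=
      fun x hx i hxi hne => hgh x hx i hxi fun heq => hne (congrArg Fin.tail heq)
    induction τ using slice_prism_cases with
    | slice t q =>
      rw [pullback_to_slice, cup_apply] at hσ
      exact ih (right_ne_zero_of_mul hσ) htail
    | prism t q =>
      rw [pullback_to_prism, cupCoboundary_apply] at hσ
      obtain ⟨i, hi, hne⟩ := Finset.exists_ne_zero_of_sum_ne_zero hσ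
      have hsub := eCube_facet_subset (ε := 1) (.inr rfl) hi
      have hmove : g σ.1 ≠ g (σ.1 + Pi.single i 1) := fun heq =>
        right_ne_zero_of_mul (left_ne_zero_of_mul hne) (by simp [aboveIndicator, heq])
      calc h σ.1 = h (facet 1 σ i).1 :=
            hgh _ (corner_mem_eCube σ) i (hsub (corner_mem_eCube _)) hmove
        _ = h (top (facet 1 σ i)) := ih (right_ne_zero_of_mul hne)
            fun x hx j hxj => htail x (hsub hx) j (hsub hxj)
        _ = h (top σ) := by rw [top_facet_one hi]

lemma head_eq_of_tail_ne {X : Finset (Fin m → ℤ)} {g : (Fin m → ℤ) → Fin (n + 1) → ℤ}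
    (hg : c1Cont X g) {x : Fin m → ℤ} (hx : x ∈ X) {i : Fin m} (hxi : x + Pi.single i 1 ∈ X)
    (hne : Fin.tail (g x) ≠ Fin.tail (g (x + Pi.single i 1))) :
    g x 0 = g (x + Pi.single i 1) 0 := by
  rcases hg x hx _ hxi (c1Adj_add_single x i) with h | h
  · exact congrFun h 0
  · exact ((c1Adj_succ_iff.1 h).resolve_left fun h' => hne h'.2).1

lemma head_cross_of_aboveIndicator_ne {X : Finset (Fin m → ℤ)}
    {g : (Fin m → ℤ) → Fin (n + 1) → ℤ} (hg : c1Cont X g) {x : Fin m → ℤ} (hx : x ∈ X) {i : Fin m}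
    (hxi : x + Pi.single i 1 ∈ X) {t : ℤ}
    (hne : aboveIndicator (fun y => g y 0) t (x + Pi.single i 1) ≠
      aboveIndicator (fun y => g y 0) t x) :
    (g x 0 = t ∧ g (x + Pi.single i 1) 0 = t + 1 ∨ g x 0 = t + 1 ∧ g (x + Pi.single i 1) 0 = t) ∧
      Fin.tail (g x) = Fin.tail (g (x + Pi.single i 1)) := by
  simp only [aboveIndicator] at hne
  rcases hg x hx _ hxi (c1Adj_add_single x i) with h | h
  · exact absurd (by simp only [h]) hne
  · rcases c1Adj_succ_iff.1 h with ⟨hstep, htail⟩ | ⟨hhead, _⟩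
    · exact ⟨by grind, htail⟩
    · exact absurd (by simp only [hhead]) hne

theorem antipodal_of_pullback_ne_zero {g : (Fin m → ℤ) → Fin n → ℤ} {τ : Cube n} {σ : Cube m}
    (hg : c1Cont (eCube σ.1 σ.2) g) (hσ : pullback g τ σ ≠ 0) :
    Antipodal τ (g σ.1) (g (top σ)) := by
  induction n generalizing σ with
  | zero => exact antipodal_iff.2 fun j => j.elim0
  | succ n ih =>
    have hhead : ∀ x ∈ eCube σ.1 σ.2, ∀ i, x + Pi.single i 1 ∈ eCube σ.1 σ.2 →
        Fin.tail (g x) ≠ Fin.tail (g (x + Pi.single i 1)) →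
          g x 0 = g (x + Pi.single i 1) 0 :=
      fun x hx i hxi => head_eq_of_tail_ne hg hx hxi
    induction τ using slice_prism_cases with
    | slice t q =>
      rw [pullback_to_slice, cup_apply] at hσ
      have hlevel : g σ.1 0 = t := by
        simpa [levelIndicator] using left_ne_zero_of_mul hσ
      have hpull := right_ne_zero_of_mul hσ
      have htop : g σ.1 0 = g (top σ) 0 :=
        apply_corner_eq_apply_top (h := fun x => g x 0) hpull hhead
      exact antipodal_slice.2 ⟨⟨hlevel, htop ▸ hlevel⟩, ih hg.tail hpull⟩
    | prism t q =>
      rw [pullback_to_prism, cupCoboundary_apply] at hσ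
      obtain ⟨i, hi, hne⟩ := Finset.exists_ne_zero_of_sum_ne_zero hσ
      have hsub := eCube_facet_subset (ε := 1) (.inr rfl) hi
      have hpull := right_ne_zero_of_mul hne
      have hjump := sub_ne_zero.1 (right_ne_zero_of_mul (left_ne_zero_of_mul hne))
      obtain ⟨hcross, htail⟩ := head_cross_of_aboveIndicator_ne hg (corner_mem_eCube σ)
        (hsub (corner_mem_eCube _)) hjump
      have htop : g (σ.1 + Pi.single i 1) 0 = g (top σ) 0 := by
        rw [← top_facet_one hi]
        exact apply_corner_eq_apply_top (h := fun x => g x 0) hpull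
          fun x hx j hxj => hhead x (hsub hx) j (hsub hxj)
      have hanti : Antipodal q (Fin.tail (g (σ.1 + Pi.single i 1))) (Fin.tail (g (top σ))) := by
        rw [← top_facet_one hi]
        exact ih (hg.mono hsub).tail hpull
      rw [antipodal_prism, htail, ← htop]
      exact ⟨hcross, hanti⟩

-- If `τ` occurs in `g_# σ`, it is the only cube that does, so each facet of `τ` occurs in
-- `∂ g_# σ = g_# ∂σ`, that is, in the image of some facet of `σ`.
theorem eCube_subset_image_of_pullback_ne_zero {g : (Fin m → ℤ) → Fin n → ℤ} {τ : Cube n}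
    {σ : Cube m} (hg : c1Cont (eCube σ.1 σ.2) g) (hσ : pullback g τ σ ≠ 0) :
    eCube τ.1 τ.2 ⊆ (eCube σ.1 σ.2).image g := by
  intro w hw
  rw [Finset.mem_image]
  have hanti := antipodal_of_pullback_ne_zero hg hσ
  induction hcard : τ.2.card generalizing τ σ with
  | zero =>
    refine ⟨σ.1, corner_mem_eCube σ, funext fun j => ?_⟩
    have hcorner := mem_eCube.1 hanti.1 j
    have hwj := mem_eCube.1 hw j
    rw [Finset.card_eq_zero] at hcard
    simp_all
  | succ N ih =>
    obtain ⟨j, hj⟩ : τ.2.Nonempty := Finset.card_pos.1 (by omega)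
    obtain ⟨ε, hε, hwfacet⟩ := exists_mem_eCube_facet hw hj
    have hd : coboundary (pullback g (facet ε τ j)) σ ≠ 0 := by
      rw [coboundary_pullback_apply]
      exact boundary_facet_ne_zero (p := τ) (c := fun ρ => pullback g ρ σ) hσ
        (fun ρ hρ => (antipodal_of_pullback_ne_zero hg hρ).unique hanti) hε hj
    obtain ⟨i, hi, δ, hδ, hne⟩ :
        ∃ i ∈ σ.2, ∃ δ : ℤ, (δ = 0 ∨ δ = 1) ∧ pullback g (facet ε τ j) (facet δ σ i) ≠ 0 := by
      by_contra! hall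
      refine hd (Finset.sum_eq_zero fun i hi => ?_)
      rw [hall i hi 1 (.inr rfl), hall i hi 0 (.inl rfl), sub_zero, mul_zero]
    have hsub := eCube_facet_subset hδ hi
    obtain ⟨y, hy, hyw⟩ := ih (hg.mono hsub) hne hwfacet
      (antipodal_of_pullback_ne_zero (hg.mono hsub) hne)
      (by simp [facet, Finset.card_erase_of_mem hj, hcard])
    exact ⟨y, hsub hy, hyw⟩

end Support

section Lefschetz

/-- The Lefschetz number of `f` on `X`, as the alternating trace of the chain map `f_#` over the
cubes of `X`. -/
def lefschetz (X : Finset (Fin n → ℤ)) (f : (Fin n → ℤ) → Fin n → ℤ) : ℤ :=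
  ∑ p ∈ cubes X, (-1) ^ p.2.card * pullback f p p

lemma lefschetz_id (X : Finset (Fin n → ℤ)) : lefschetz X id = cubEuler X := by
  simp only [lefschetz, pullback_id_self, mul_one, cubEuler_eq_sum_cubes]

lemma lefschetz_congr {X : Finset (Fin n → ℤ)} {f g : (Fin n → ℤ) → Fin n → ℤ}
    (h : ∀ x ∈ X, f x = g x) : lefschetz X f = lefschetz X g :=
  Finset.sum_congr rfl fun p hp => by
    rw [pullback_congr fun x hx => h x (mem_cubes.1 hp hx)]

/-- The map on `{0, 1} × ℤ^m` which is `f₀` on the slice `0` and `f₁` on the slice `1`. -/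
def homotopyStep (f₀ f₁ : (Fin m → ℤ) → Fin n → ℤ) (y : Fin (m + 1) → ℤ) : Fin n → ℤ :=
  if y 0 = 0 then f₀ (Fin.tail y) else f₁ (Fin.tail y)

lemma coboundary_add_boundary_homotopyStep (f₀ f₁ : (Fin m → ℤ) → Fin n → ℤ) (τ : Cube n)
    (σ : Cube m) :
    coboundary (fun ρ => pullback (homotopyStep f₀ f₁) τ (prism 0 ρ)) σ +
        boundary (fun ρ => pullback (homotopyStep f₀ f₁) ρ (prism 0 σ)) τ =
      pullback f₁ τ σ - pullback f₀ τ σ := by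
  have h₀ : pullback (homotopyStep f₀ f₁) τ (slice 0 σ) = pullback f₀ τ σ := by
    rw [pullback_slice]
    rfl
  have h₁ : pullback (homotopyStep f₀ f₁) τ (slice (0 + 1) σ) = pullback f₁ τ σ := by
    rw [pullback_slice]
    rfl
  rw [← coboundary_pullback_apply, coboundary_prism, h₀, h₁, add_sub_cancel]

lemma c1Cont_homotopyStep {X : Finset (Fin m → ℤ)} {f₀ f₁ : (Fin m → ℤ) → Fin n → ℤ}
    (hf₀ : c1Cont X f₀) (hf₁ : c1Cont X f₁)
    (hstep : ∀ x ∈ X, f₀ x = f₁ x ∨ c1Adj (f₀ x) (f₁ x)) {σ : Cube m} (hσ : σ ∈ cubes X) :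
    c1Cont (eCube (prism 0 σ).1 (prism 0 σ).2) (homotopyStep f₀ f₁) := by
  intro x hx y hy hxy
  rw [mem_eCube_prism] at hx hy
  have hxX := mem_cubes.1 hσ hx.2
  have hyX := mem_cubes.1 hσ hy.2
  have hsymm : f₁ (Fin.tail x) = f₀ (Fin.tail x) ∨ c1Adj (f₁ (Fin.tail x)) (f₀ (Fin.tail x)) :=
    (hstep _ hxX).imp Eq.symm fun h => by simpa only [c1Adj, abs_sub_comm] using h
  rcases c1Adj_succ_iff.1 hxy with ⟨hhead, htail⟩ | ⟨hhead, htail⟩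
  · rcases hx.1 with h | h <;> rcases hy.1 with h' | h' <;>
      simp_all [homotopyStep]
  · rcases hx.1 with h | h
    · simpa [homotopyStep, ← hhead, h] using hf₀ _ hxX _ hyX htail
    · simpa [homotopyStep, ← hhead, h] using hf₁ _ hxX _ hyX htail

lemma lefschetz_eq_of_step {X : Finset (Fin n → ℤ)} {f₀ f₁ : (Fin n → ℤ) → Fin n → ℤ}
    (hX₀ : MapsInto X X f₀) (hX₁ : MapsInto X X f₁) (hf₀ : c1Cont X f₀) (hf₁ : c1Cont X f₁)
    (hstep : ∀ x ∈ X, f₀ x = f₁ x ∨ c1Adj (f₀ x) (f₁ x)) :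
    lefschetz X f₀ = lefschetz X f₁ := by
  have hsupport : ∀ σ ∈ cubes X, ∀ τ, pullback (homotopyStep f₀ f₁) τ (prism 0 σ) ≠ 0 →
      τ ∈ cubes X := by
    refine fun σ hσ τ hτ => mem_cubes.2
      ((eCube_subset_image_of_pullback_ne_zero (c1Cont_homotopyStep hf₀ hf₁ hstep hσ) hτ).trans
        (Finset.image_subset_iff.2 fun y hy => ?_))
    have hyX := mem_cubes.1 hσ (mem_eCube_prism.1 hy).2
    rw [homotopyStep]
    split_ifs
    exacts [hX₀ _ hyX, hX₁ _ hyX]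
  have htrace := sum_neg_one_pow_mul_coboundary_add_boundary
    (fun _ hε _ hp _ hi => facet_mem_cubes hε hp hi) hsupport
  simp only [coboundary_add_boundary_homotopyStep, mul_sub, Finset.sum_sub_distrib] at htrace
  exact (sub_eq_zero.1 htrace).symm

theorem lefschetz_eq_of_homotopic {X : Finset (Fin n → ℤ)} {f g : (Fin n → ℤ) → Fin n → ℤ}
    (h : c1Homotopic X X f g) : lefschetz X f = lefschetz X g := by
  obtain ⟨k, H, hX, h₀, h₁, hstep, hcont⟩ := h
  have hstage : ∀ t ≤ k, lefschetz X f = lefschetz X fun x => H x t := by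
    intro t ht
    induction t with
    | zero => exact lefschetz_congr fun x hx => (h₀ x hx).symm
    | succ t ih =>
      rw [ih (by omega)]
      exact lefschetz_eq_of_step (fun x hx => hX x hx t (by omega)) (fun x hx => hX x hx _ ht)
        (hcont t (by omega)) (hcont _ ht) fun x hx => hstep x hx t ht
  rw [hstage k le_rfl, lefschetz_congr h₁]

lemma exists_antipodal_of_lefschetz_ne_zero {X : Finset (Fin n → ℤ)}
    {f : (Fin n → ℤ) → Fin n → ℤ} (hf : c1Cont X f) (h : lefschetz X f ≠ 0) :
    ∃ p ∈ cubes X, Antipodal p (f p.1) (f (top p)) := by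
  obtain ⟨p, hp, hne⟩ := Finset.exists_ne_zero_of_sum_ne_zero h
  exact ⟨p, hp, antipodal_of_pullback_ne_zero (hf.mono (mem_cubes.1 hp))
    (right_ne_zero_of_mul hne)⟩

end Lefschetz

section FixedPoints

lemma _root_.c1Homotopic.c1Cont_left {X : Finset (Fin m → ℤ)} {Y : Finset (Fin n → ℤ)}
    {f g : (Fin m → ℤ) → Fin n → ℤ} (h : c1Homotopic X Y f g) : c1Cont X f := by
  obtain ⟨k, H, -, h₀, -, -, hcont⟩ := h
  intro x hx y hy hxy
  rw [← h₀ x hx, ← h₀ y hy]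
  exact hcont 0 k.zero_le x hx y hy hxy

lemma eq_or_c1Adj_update {v : Fin n → ℤ} {i : Fin n} {c : ℤ} (h : |v i - c| ≤ 1) :
    v = Function.update v i c ∨ c1Adj v (Function.update v i c) := by
  by_cases hc : v i = c
  · exact .inl (by simp [← hc])
  · right
    rw [c1Adj, Finset.sum_eq_single_of_mem i (Finset.mem_univ i) fun j _ hj => by simp [hj]]
    rw [Function.update_self]
    have := abs_pos.2 (sub_ne_zero.2 hc)
    omega

lemma nApproxFix_of_mem_eCube {X : Finset (Fin n → ℤ)} {f : (Fin n → ℤ) → Fin n → ℤ} {p : Cube n}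
    (hp : p ∈ cubes X) {v : Fin n → ℤ} (hv : v ∈ eCube p.1 p.2) (hfv : f v ∈ eCube p.1 p.2) :
    nApproxFix X f n v := by
  rw [mem_eCube] at hv hfv
  refine ⟨n, fun t j => if (j : ℕ) < t then f v j else v j, le_rfl, by simp, by simp, ?_, ?_⟩
  · refine fun t _ => mem_cubes.1 hp (mem_eCube.2 fun j => ?_)
    beta_reduce
    split_ifs
    exacts [hfv j, hv j]
  · intro t ht
    have hupdate : (fun j : Fin n => if (j : ℕ) < t + 1 then f v j else v j) =
        Function.update (fun j : Fin n => if (j : ℕ) < t then f v j else v j) ⟨t, ht⟩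
          (f v ⟨t, ht⟩) := by
      funext j
      by_cases hj : j = ⟨t, ht⟩
      · simp [hj]
      · have hjt : (j : ℕ) ≠ t := fun h => hj (Fin.ext h)
        rw [Function.update_of_ne hj]
        exact if_congr (by omega) rfl rfl
    beta_reduce
    rw [hupdate]
    refine eq_or_c1Adj_update ?_
    have := hv ⟨t, ht⟩
    have := hfv ⟨t, ht⟩
    simp only [lt_irrefl, if_false, abs_le]
    omega

end FixedPoints

end DigitalImage

open DigitalImage in
theorem fixed_or_napprox_of_homotopic_id_general {n : ℕ} (X : Finset (Fin n → ℤ))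
    (hχ : cubEuler X ≠ 0) (f : (Fin n → ℤ) → (Fin n → ℤ)) (hfid : c1Homotopic X X f id) :
    (∃ x ∈ X, f x = x) ∨
      ∃ x ∈ X, ∃ y ∈ X, x ≠ y ∧ nApproxFix X f n x ∧ nApproxFix X f n y := by
  have hlef : lefschetz X f ≠ 0 := by
    rwa [lefschetz_eq_of_homotopic hfid, lefschetz_id]
  obtain ⟨p, hp, hcorner, htop, -⟩ := exists_antipodal_of_lefschetz_ne_zero hfid.c1Cont_left hlef
  have hpX := mem_cubes.1 hp
  rcases p.2.eq_empty_or_nonempty with hdim | ⟨i, hi⟩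
  · exact .inl ⟨p.1, hpX (corner_mem_eCube p),
      funext fun j => by simpa [hdim] using mem_eCube.1 hcorner j⟩
  · refine .inr ⟨p.1, hpX (corner_mem_eCube p), top p, hpX (top_mem_eCube p), fun h => ?_,
      nApproxFix_of_mem_eCube hp (corner_mem_eCube p) hcorner,
      nApproxFix_of_mem_eCube hp (top_mem_eCube p) htop⟩
    simpa [top, hi] using congrFun h i

/-- Let `X ⊆ ℤ^n` be a finite digital image with `c1`-adjacency, `n ≤ 3`, whose cubical
Euler characteristic `χ̄(X)` is nonzero, and let `f : X → X` be a `c1`-continuous self-map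
homotopic to the identity. Then `f` has a fixed point or at least two distinct
`n`-approximate fixed points. -/
theorem fixed_or_napprox_of_homotopic_id {n : ℕ} (hn : n ≤ 3) (X : Finset (Fin n → ℤ))
    (hχ : cubEuler X ≠ 0)
    (f : (Fin n → ℤ) → (Fin n → ℤ))
    (hfX : MapsInto X X f) (hf : c1Cont X f)
    (hfid : c1Homotopic X X f id) :
    (∃ x ∈ X, f x = x) ∨
      ∃ x ∈ X, ∃ y ∈ X, x ≠ y ∧ nApproxFix X f n x ∧ nApproxFix X f n y :=
  fixed_or_napprox_of_homotopic_id_general X hχ f hfid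
end

section
/- Let X ⊆ ℤ^n be a finite contractible digital image with c1-adjacency, where n ≤ 3. Then every c1-continuous self-map f : X → X has a fixed point or has at least two distinct n-approximate fixed points. -/
/-- `X` is contractible: the identity map of `X` is homotopic to a constant self-map. -/
def c1Contractible {n : ℕ} (X : Finset (Fin n → ℤ)) : Prop :=
  ∃ x₀ ∈ X, c1Homotopic X X id (fun _ => x₀)

/-!
Recording all inequalities `s < x i` embeds `ℤ^n` isometrically into a hypercube, so `X` becomes
a set of vertices there. Counted modulo 2, the number of cubes in `X` which a self-map carries
isomorphically onto themselves is a homotopy invariant: a morphism of reflexive graphs between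
hypercubes commutes with the cubical boundary, as counting facets in a single cube shows, and
applied to prisms this is the chain homotopy formula. A constant map carries exactly one cube onto
itself, so the vertices of some cube in `X` are mapped by `f` to vertices of the same cube.

If that cube is a point, it is a fixed point of `f`. Otherwise it has two distinct vertices. A cube
contained in the image of `ℤ^n` has at most one free direction for each of the `n` coordinates, so
replacing the coordinates of a vertex `x` by those of `f x` one at a time gives a path in `X` of
length at most `n` from `x` to `f x`.
-/

section Subcubes

variable {ι κ : Type*} [DecidableEq ι] [DecidableEq κ]

/-- The neighbour of the vertex `x` of the hypercube `ι → Bool` across the edge in direction `l`. -/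
def flipAt (l : ι) (x : ι → Bool) : ι → Bool := Function.update x l (!x l)

/-- Reflexive adjacency of the hypercube: `x` and `y` are equal or joined by an edge. -/
def WeakAdj (x y : ι → Bool) : Prop := {i | x i ≠ y i}.Subsingleton

/-- `f` is a morphism of reflexive graphs on the set `X` of vertices of the hypercube. -/
def WeakHomOn (f : (ι → Bool) → κ → Bool) (X : Set (ι → Bool)) : Prop :=
  ∀ x ∈ X, ∀ y ∈ X, WeakAdj x y → WeakAdj (f x) (f y)

/-- The subcube through the vertex `a` of the hypercube, with set of free directions `D`. -/
def subcube (a : ι → Bool) (D : Set ι) : Set (ι → Bool) := {x | ∀ i ∉ D, x i = a i}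

omit [DecidableEq ι] in
theorem WeakAdj.symm {x y : ι → Bool} (h : WeakAdj x y) : WeakAdj y x := by
  simpa only [WeakAdj, ne_comm] using h

@[simp]
theorem flipAt_same (l : ι) (x : ι → Bool) : flipAt l x l = !x l := by simp [flipAt]

@[simp]
theorem flipAt_of_ne {l i : ι} (h : i ≠ l) (x : ι → Bool) : flipAt l x i = x i := by
  simp [flipAt, h]

@[simp]
theorem flipAt_flipAt (l : ι) (x : ι → Bool) : flipAt l (flipAt l x) = x := by
  simp [flipAt]

theorem flipAt_comm (k l : ι) (x : ι → Bool) : flipAt k (flipAt l x) = flipAt l (flipAt k x) := by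
  funext i
  by_cases hk : i = k <;> by_cases hl : i = l <;> grind [flipAt_same, flipAt_of_ne]

theorem weakAdj_flipAt (l : ι) (x : ι → Bool) : WeakAdj x (flipAt l x) := by
  have hne {i : ι} (hi : x i ≠ flipAt l x i) : i = l :=
    of_not_not fun h => hi (flipAt_of_ne h x).symm
  exact fun i hi j hj => (hne hi).trans (hne hj).symm

theorem WeakAdj.eq_flipAt {x y : ι → Bool} {l : ι} (h : WeakAdj x y) (hl : x l ≠ y l) :
    y = flipAt l x := by
  funext i
  by_cases hi : i = l
  · subst hi
    rw [flipAt_same]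
    exact (Bool.not_eq.2 hl).symm
  · rw [flipAt_of_ne hi]
    by_contra hne
    exact hi (h (Ne.symm hne) hl)

omit [DecidableEq ι] [DecidableEq κ] in
theorem WeakHomOn.mono {f : (ι → Bool) → κ → Bool} {X Y : Set (ι → Bool)} (hf : WeakHomOn f Y)
    (h : X ⊆ Y) : WeakHomOn f X :=
  fun x hx y hy => hf x (h hx) y (h hy)

omit [DecidableEq ι] in
theorem self_mem_subcube (a : ι → Bool) (D : Set ι) : a ∈ subcube a D := fun _ _ => rfl

omit [DecidableEq ι] in
theorem subcube_eq_of_mem {a b : ι → Bool} {D : Set ι} (h : b ∈ subcube a D) :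
    subcube b D = subcube a D := by
  ext x
  exact forall₂_congr fun i hi => by rw [h i hi]

theorem update_mem_subcube {a x : ι → Bool} {D : Set ι} {l : ι} (δ : Bool) (hl : l ∈ D)
    (hx : x ∈ subcube a D) : Function.update x l δ ∈ subcube a D := fun i hi => by
  rw [Function.update_of_ne (by grind), hx i hi]

theorem flipAt_mem_subcube {a x : ι → Bool} {D : Set ι} {l : ι} (hl : l ∈ D)
    (hx : x ∈ subcube a D) : flipAt l x ∈ subcube a D :=
  update_mem_subcube _ hl hx

theorem mem_subcube_facet {a x : ι → Bool} {D : Finset ι} {l : ι} {δ : Bool} (hl : l ∈ D) :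
    x ∈ subcube (Function.update a l δ) ↑(D.erase l) ↔ x ∈ subcube a D ∧ x l = δ := by
  simp only [subcube, Set.mem_ofPred_eq]
  grind

theorem subcube_facet_subset {a : ι → Bool} {D : Finset ι} {l : ι} (δ : Bool) (hl : l ∈ D) :
    subcube (Function.update a l δ) ↑(D.erase l) ⊆ subcube a D :=
  fun _ hx => ((mem_subcube_facet hl).1 hx).1

theorem mem_or_flipAt_mem_subcube_facet {a x : ι → Bool} {D : Finset ι} {l : ι} (δ : Bool)
    (hl : l ∈ D) (hx : x ∈ subcube a D) :
    x ∈ subcube (Function.update a l δ) ↑(D.erase l) ∨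
      flipAt l x ∈ subcube (Function.update a l δ) ↑(D.erase l) := by
  simp only [mem_subcube_facet hl, hx, flipAt_mem_subcube (Finset.mem_coe.2 hl) hx, true_and,
    flipAt_same]
  cases x l <;> cases δ <;> simp

theorem subcube_facets_inter_nonempty (a : ι → Bool) {D : Finset ι} {k l : ι} {δ ε : Bool}
    (hk : k ∈ D) (hl : l ∈ D) (h : k = l → δ = ε) :
    (subcube (Function.update a k δ) ↑(D.erase k) ∩
      subcube (Function.update a l ε) ↑(D.erase l)).Nonempty := by
  refine ⟨Function.update (Function.update a k δ) l ε, ?_, ?_⟩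
  · rw [mem_subcube_facet hk]
    grind [subcube]
  · rw [mem_subcube_facet hl]
    grind [subcube]

theorem apply_eq_of_apply_flipAt_eq {α : Type*} {a : ι → Bool} {D : Finset ι}
    {g : (ι → Bool) → α} (h : ∀ x ∈ subcube a D, ∀ l ∈ D, g (flipAt l x) = g x) :
    ∀ x ∈ subcube a D, g x = g a := by
  induction D using Finset.induction_on with
  | empty =>
    intro x hx
    rw [show x = a from funext fun i => hx i (by simp)]
  | insert l D hl ih =>
    have ih : ∀ x ∈ subcube a D, g x = g a :=
      ih fun x hx k hk => h x (fun i hi => hx i (by grind)) k (by simp [hk])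
    intro x hx
    by_cases hxl : x l = a l
    · exact ih x fun i hi => by grind [subcube]
    · rw [← h x hx l (by simp)]
      refine ih _ fun i hi => ?_
      by_cases hil : i = l
      · subst hil
        rw [flipAt_same]
        exact Bool.not_eq.2 hxl
      · rw [flipAt_of_ne hil]
        exact hx i (by grind)

/-- `Φ` restricts to an isomorphism from the subcube `(a, D)` onto a subcube with set of free
directions `E`. The bijection of directions is recorded as a map `p` on all of `κ`, of which
only the values on `E` matter. -/
def IsCubeIso (Φ : (ι → Bool) → κ → Bool) (a : ι → Bool) (D : Finset ι) (E : Finset κ) : Prop :=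
  ∃ p : κ → ι, Set.BijOn p E D ∧
    ∀ j ∈ E, ∀ x ∈ subcube a D, Φ (flipAt (p j) x) = flipAt j (Φ x)

namespace IsCubeIso

variable {Φ : (ι → Bool) → κ → Bool} {a : ι → Bool} {D : Finset ι} {E : Finset κ}

theorem of_empty (Φ : (ι → Bool) → κ → Bool) (a : ι → Bool) [Nonempty (κ → ι)] :
    IsCubeIso Φ a ∅ ∅ :=
  ⟨Classical.arbitrary (κ → ι), by simp, by simp⟩

theorem apply_eq (h : IsCubeIso Φ a D E) {x y : ι → Bool} (hx : x ∈ subcube a D)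
    (hy : y ∈ subcube a D) {i : κ} (hi : i ∉ E) : Φ x i = Φ y i := by
  obtain ⟨p, hp, hΦ⟩ := h
  have hflip : ∀ x ∈ subcube a D, ∀ l ∈ D, Φ (flipAt l x) i = Φ x i := by
    intro x hx l hl
    obtain ⟨j, hj, rfl⟩ := hp.surjOn hl
    rw [hΦ j hj x hx, flipAt_of_ne (by grind)]
  exact (apply_eq_of_apply_flipAt_eq (g := (Φ · i)) hflip x hx).trans
    (apply_eq_of_apply_flipAt_eq (g := (Φ · i)) hflip y hy).symm

theorem mem_of_mapsTo (h : IsCubeIso Φ a D E) {b : κ → Bool} {Q : Set κ}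
    (hQ : Set.MapsTo Φ (subcube a D) (subcube b Q)) {j : κ} (hj : j ∈ E) : j ∈ Q := by
  obtain ⟨p, hp, hΦ⟩ := h
  by_contra hjQ
  have hflip := congrFun (hΦ j hj a (self_mem_subcube a D)) j
  rw [hQ (flipAt_mem_subcube (hp.mapsTo hj) (self_mem_subcube a D)) j hjQ, flipAt_same,
    hQ (self_mem_subcube a D) j hjQ] at hflip
  simp at hflip

theorem subcube_subset_image (h : IsCubeIso Φ a D E) : subcube (Φ a) E ⊆ Φ '' subcube a D := by
  obtain ⟨p, hp, hΦ⟩ := h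
  have hflip : ∀ y, ∀ j ∈ E, y ∈ Φ '' subcube a D → flipAt j y ∈ Φ '' subcube a D := by
    rintro _ j hj ⟨x, hx, rfl⟩
    exact ⟨flipAt (p j) x, flipAt_mem_subcube (hp.mapsTo hj) hx, hΦ j hj x hx⟩
  intro y hy
  have hmem : (y ∈ Φ '' subcube a D) = (Φ a ∈ Φ '' subcube a D) :=
    apply_eq_of_apply_flipAt_eq (g := (· ∈ Φ '' subcube a D)) (fun z _ j hj => propext
      ⟨fun hz => by simpa using hflip _ j hj hz, hflip z j hj⟩) y hy
  exact hmem.mpr (Set.mem_image_of_mem Φ (self_mem_subcube a D))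

theorem exists_facet_of_insert {j : κ} (hj : j ∉ E) (h : IsCubeIso Φ a D (insert j E)) :
    ∃ l ∈ D, (∀ x ∈ subcube a D, Φ (flipAt l x) j = !Φ x j) ∧
      ∀ δ, IsCubeIso Φ (Function.update a l δ) (D.erase l) E := by
  obtain ⟨p, hp, hΦ⟩ := h
  have hpj : p j ∈ D := hp.mapsTo (by simp)
  have hbij := hp.sdiff_singleton (a := j) (by simp)
  refine ⟨p j, hpj, fun x hx => by rw [hΦ j (by simp) x hx, flipAt_same], fun δ => ⟨p, ?_, ?_⟩⟩
  · simpa [hj] using hbij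
  · exact fun i hi x hx => hΦ i (by simp [hi]) x (subcube_facet_subset δ hpj hx)

theorem of_opposite_facet_ne (hΦ : WeakHomOn Φ (subcube a D)) {l : ι} {δ : Bool} (hl : l ∈ D)
    {j : κ} (hj : j ∉ E) (h : IsCubeIso Φ (Function.update a l δ) (D.erase l) E)
    (hne : ∀ x ∈ subcube (Function.update a l δ) ↑(D.erase l), Φ x j ≠ Φ (flipAt l x) j) :
    IsCubeIso Φ a D (insert j E) := by
  obtain ⟨p, hp, hpΦ⟩ := h
  have hacross {x : ι → Bool} (hx : x ∈ subcube (Function.update a l δ) ↑(D.erase l)) :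
      Φ (flipAt l x) = flipAt j (Φ x) := by
    have hxD := subcube_facet_subset δ hl hx
    exact (hΦ x hxD _ (flipAt_mem_subcube hl hxD) (weakAdj_flipAt l x)).eq_flipAt (hne x hx)
  have hEq : Set.EqOn p (Function.update p j l) E := fun i hi =>
    (Function.update_of_ne (by grind) _ _).symm
  refine ⟨Function.update p j l, ?_, ?_⟩
  · have hbij := (hp.congr hEq).insert (a := j) (by simp)
    rwa [← Finset.coe_insert, Function.update_self, ← Finset.coe_insert,
      Finset.insert_erase hl] at hbij
  · intro i hi x hx
    rcases Finset.mem_insert.1 hi with rfl | hi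
    · rw [Function.update_self]
      rcases mem_or_flipAt_mem_subcube_facet δ hl hx with hx' | hx'
      · exact hacross hx'
      · simpa using congrArg (flipAt i) (hacross hx').symm
    · rw [← hEq hi]
      have hpi : p i ∈ (↑(D.erase l) : Set ι) := hp.mapsTo hi
      rcases mem_or_flipAt_mem_subcube_facet δ hl hx with hx' | hx'
      · exact hpΦ i hi x hx'
      · calc Φ (flipAt (p i) x) = Φ (flipAt l (flipAt (p i) (flipAt l x))) := by
              rw [flipAt_comm, flipAt_flipAt]
          _ = flipAt j (flipAt i (Φ (flipAt l x))) := by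
              rw [hacross (flipAt_mem_subcube hpi hx'), hpΦ i hi _ hx']
          _ = flipAt i (flipAt j (Φ (flipAt l x))) := flipAt_comm _ _ _
          _ = flipAt i (Φ x) := by rw [← hacross hx', flipAt_flipAt]

end IsCubeIso

end Subcubes

section Degree

variable {ι κ : Type*} [DecidableEq ι] [DecidableEq κ]

open Classical in
/-- The Iverson bracket of `P`, with values in `ZMod 2`. -/
noncomputable def iverson (P : Prop) : ZMod 2 := if P then 1 else 0

/-- The set of facets of a cube with free directions `D`; the facet of `subcube a D` on which
the coordinate `l` is `δ` is indexed by `(l, δ)`. -/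
def facets (D : Finset ι) : Finset (ι × Bool) := D ×ˢ Finset.univ

@[simp]
theorem iverson_of {P : Prop} (h : P) : iverson P = 1 := if_pos h

@[simp]
theorem iverson_of_not {P : Prop} (h : ¬P) : iverson P = 0 := if_neg h

theorem iverson_ne_zero {P : Prop} : iverson P ≠ 0 ↔ P := by
  by_cases h : P <;> simp [h]

theorem sum_iverson_of_subsingleton {α : Type*} (s : Finset α) {P : α → Prop}
    (h : ∀ x ∈ s, ∀ y ∈ s, P x → P y → x = y) :
    ∑ x ∈ s, iverson (P x) = iverson (∃ x ∈ s, P x) := by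
  by_cases hP : ∃ x ∈ s, P x
  · obtain ⟨x, hx, hPx⟩ := hP
    rw [Finset.sum_eq_single_of_mem x hx fun y hy hne =>
      iverson_of_not fun hPy => hne (h y hy x hx hPy hPx), iverson_of hPx, iverson_of ⟨x, hx, hPx⟩]
  · rw [iverson_of_not hP]
    exact Finset.sum_eq_zero fun x hx => iverson_of_not fun hPx => hP ⟨x, hx, hPx⟩

omit [DecidableEq ι] in
@[simp, grind =]
theorem mem_facets {D : Finset ι} {q : ι × Bool} : q ∈ facets D ↔ q.1 ∈ D := by simp [facets]

theorem sum_facets_facets_eq_zero {R : Type*} [Ring R] [CharP R 2] (D : Finset ι)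
    {F : ι × Bool → ι × Bool → R} (hF : ∀ q r, q.1 ≠ r.1 → F q r = F r q) :
    ∑ q ∈ facets D, ∑ r ∈ facets (D.erase q.1), F q r = 0 := by
  rw [Finset.sum_sigma']
  refine Finset.sum_involution (fun x _ => ⟨x.2, x.1⟩) ?_ ?_ ?_ ?_
  · intro x hx
    rw [hF x.1 x.2 (by grind)]
    exact CharTwo.add_self_eq_zero _
  · intro x hx _ h
    have hfst : x.2.1 = x.1.1 := congrArg (fun y => y.1.1) h
    exact absurd hfst (by grind)
  · intro x hx
    grind
  · exact fun _ _ => rfl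

variable {Φ : (ι → Bool) → κ → Bool} {a : ι → Bool} {D : Finset ι} {E : Finset κ}
  {b : κ → Bool} {Q : Set κ}

theorem IsCubeIso.exists_unique_facet_mapsTo {j : κ} (hE : ↑E ⊆ Q) (hj : j ∉ Q)
    (h : IsCubeIso Φ a D (insert j E))
    (hQ : Set.MapsTo Φ (subcube a D) (subcube b (insert j Q))) :
    ∃ q₀ ∈ facets D, ∀ q ∈ facets D,
      (IsCubeIso Φ (Function.update a q.1 q.2) (D.erase q.1) E ∧
        Set.MapsTo Φ (subcube (Function.update a q.1 q.2) ↑(D.erase q.1)) (subcube b Q)) ↔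
      q = q₀ := by
  have hjE : j ∉ E := fun hjE => hj (hE hjE)
  obtain ⟨k, hk, hflip, hiso⟩ := h.exists_facet_of_insert hjE
  obtain ⟨x, hx, hxj⟩ : ∃ x ∈ subcube a D, Φ x j = b j := by
    have ha := self_mem_subcube a D
    by_cases haj : Φ a j = b j
    · exact ⟨a, ha, haj⟩
    · refine ⟨flipAt k a, flipAt_mem_subcube hk ha, ?_⟩
      rw [hflip a ha]
      exact Bool.not_eq.2 haj
  refine ⟨(k, x k), by simp [hk], fun ⟨l, δ⟩ hl => ⟨fun ⟨_, hmaps⟩ => ?_, ?_⟩⟩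
  · replace hl : l ∈ D := by simpa using hl
    have hval {y : ι → Bool} (hy : y ∈ subcube a D) (hyl : y l = δ) : Φ y j = b j :=
      hmaps ((mem_subcube_facet hl).2 ⟨hy, hyl⟩) j hj
    obtain rfl : l = k := by
      by_contra hne
      have hy := update_mem_subcube δ hl hx
      have hyj := hval (flipAt_mem_subcube hk hy) (by simp [flipAt_of_ne hne])
      rw [hflip _ hy, hval hy (by simp)] at hyj
      exact Bool.not_ne_self _ hyj
    obtain rfl : δ = x l := by
      by_contra hne
      have hxj' := hval (flipAt_mem_subcube hl hx) (by
        rw [flipAt_same]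
        exact Bool.not_eq.2 (Ne.symm hne))
      rw [hflip x hx, hxj] at hxj'
      exact Bool.not_ne_self _ hxj'
    rfl
  · rintro ⟨⟩
    refine ⟨hiso (x k), fun y hy i hi => ?_⟩
    rcases eq_or_ne i j with rfl | hij
    · rw [(hiso (x k)).apply_eq hy ((mem_subcube_facet hk).2 ⟨hx, rfl⟩) hjE, hxj]
    · exact hQ (subcube_facet_subset _ hk hy) i (by grind)

theorem exists_isCubeIso_insert_of_facets (hΦ : WeakHomOn Φ (subcube a D)) (hE : ↑E ⊆ Q)
    {k l : ι} {δ ε : Bool} (hl : l ∈ D) (hk : k ∈ D)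
    (hliso : IsCubeIso Φ (Function.update a l δ) (D.erase l) E)
    (hlmaps : Set.MapsTo Φ (subcube (Function.update a l δ) ↑(D.erase l)) (subcube b Q))
    (hkiso : IsCubeIso Φ (Function.update a k ε) (D.erase k) E)
    (hkmaps : ¬Set.MapsTo Φ (subcube (Function.update a k ε) ↑(D.erase k)) (subcube b Q)) :
    ∃ j ∉ Q, IsCubeIso Φ a D (insert j E) ∧
      Set.MapsTo Φ (subcube a D) (subcube b (insert j Q)) := by
  obtain ⟨z, hz, hzQ⟩ : ∃ z ∈ subcube (Function.update a k ε) ↑(D.erase k), Φ z ∉ subcube b Q := by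
    simpa [Set.MapsTo] using hkmaps
  obtain ⟨j, hj, hzj⟩ : ∃ j ∉ Q, Φ z j ≠ b j := by simpa [subcube] using hzQ
  have hjE : j ∉ E := fun h => hj (hE h)
  have hbad {x : ι → Bool} (hx : x ∈ subcube (Function.update a k ε) ↑(D.erase k)) :
      Φ x j ≠ b j := by rwa [hkiso.apply_eq hx hz hjE]
  have hopp : k = l ∧ δ ≠ ε := by
    by_contra hnot
    obtain ⟨x, hxl, hxk⟩ := subcube_facets_inter_nonempty (δ := δ) (ε := ε) a hl hk (by grind)
    exact hbad hxk (hlmaps hxl j hj)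
  obtain ⟨rfl, hδε⟩ := hopp
  have hD : IsCubeIso Φ a D (insert j E) := by
    refine hliso.of_opposite_facet_ne hΦ hk hjE fun x hx => ?_
    have hxD := (mem_subcube_facet hk).1 hx
    rw [hlmaps hx j hj]
    refine (hbad ((mem_subcube_facet hk).2 ⟨flipAt_mem_subcube hk hxD.1, ?_⟩)).symm
    rw [flipAt_same, hxD.2]
    exact Bool.not_eq.2 hδε
  refine ⟨j, hj, hD, fun x hx i hi => ?_⟩
  have hmem := self_mem_subcube (Function.update a k δ) ↑(D.erase k)
  rw [hD.apply_eq hx (subcube_facet_subset δ hk hmem) (by grind)]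
  exact hlmaps hmem i (by grind)

theorem exists_isCubeIso_insert_of_sum_facets_ne_zero (hΦ : WeakHomOn Φ (subcube a D))
    (hE : ↑E ⊆ Q)
    (hsum : ∑ q ∈ facets D,
      iverson (IsCubeIso Φ (Function.update a q.1 q.2) (D.erase q.1) E) = 0)
    (hne : ∑ q ∈ facets D,
      iverson (IsCubeIso Φ (Function.update a q.1 q.2) (D.erase q.1) E ∧
        Set.MapsTo Φ (subcube (Function.update a q.1 q.2) ↑(D.erase q.1)) (subcube b Q)) ≠ 0) :
    ∃ j ∉ Q, IsCubeIso Φ a D (insert j E) ∧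
      Set.MapsTo Φ (subcube a D) (subcube b (insert j Q)) := by
  obtain ⟨l, hl, hlne⟩ := Finset.exists_ne_zero_of_sum_ne_zero hne
  obtain ⟨hliso, hlmaps⟩ := iverson_ne_zero.1 hlne
  obtain ⟨k, hk, hkiso, hkmaps⟩ : ∃ q ∈ facets D,
      IsCubeIso Φ (Function.update a q.1 q.2) (D.erase q.1) E ∧
      ¬Set.MapsTo Φ (subcube (Function.update a q.1 q.2) ↑(D.erase q.1)) (subcube b Q) := by
    by_contra! hall
    refine hne ((Finset.sum_congr rfl fun q hq => ?_).trans hsum)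
    simp only [and_iff_left_of_imp (hall q hq)]
  exact exists_isCubeIso_insert_of_facets hΦ hE (mem_facets.1 hl) (mem_facets.1 hk) hliso hlmaps
    hkiso hkmaps

theorem sum_facets_iverson_of_sum_eq_zero (hΦ : WeakHomOn Φ (subcube a D)) (hE : ↑E ⊆ Q)
    (hsum : ∑ q ∈ facets D,
      iverson (IsCubeIso Φ (Function.update a q.1 q.2) (D.erase q.1) E) = 0) :
    ∑ q ∈ facets D,
        iverson (IsCubeIso Φ (Function.update a q.1 q.2) (D.erase q.1) E ∧
          Set.MapsTo Φ (subcube (Function.update a q.1 q.2) ↑(D.erase q.1)) (subcube b Q)) =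
      iverson (∃ j ∉ Q, IsCubeIso Φ a D (insert j E) ∧
        Set.MapsTo Φ (subcube a D) (subcube b (insert j Q))) := by
  by_cases h : ∃ j ∉ Q, IsCubeIso Φ a D (insert j E) ∧
      Set.MapsTo Φ (subcube a D) (subcube b (insert j Q))
  · rw [iverson_of h]
    obtain ⟨j, hj, hiso, hmaps⟩ := h
    obtain ⟨q₀, hq₀, hunique⟩ := hiso.exists_unique_facet_mapsTo hE hj hmaps
    rw [Finset.sum_eq_single_of_mem q₀ hq₀
      fun q hq hne => iverson_of_not (mt (hunique q hq).1 hne)]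
    exact iverson_of ((hunique q₀ hq₀).2 rfl)
  · rw [iverson_of_not h]
    by_contra hne
    exact h (exists_isCubeIso_insert_of_sum_facets_ne_zero hΦ hE hsum hne)

theorem sum_facets_iverson_isCubeIso (hΦ : WeakHomOn Φ (subcube a D))
    (hcard : D.card = E.card + 1) :
    ∑ q ∈ facets D, iverson (IsCubeIso Φ (Function.update a q.1 q.2) (D.erase q.1) E) = 0 := by
  induction E using Finset.induction_on generalizing a D with
  | empty =>
    obtain ⟨l, rfl⟩ := Finset.card_eq_one.1 hcard
    have : Nonempty ι := ⟨l⟩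
    simp [facets, IsCubeIso.of_empty, CharTwo.add_self_eq_zero]
  | insert j E hj ih =>
    have hfacet {q : ι × Bool} (hq : q ∈ facets D) :
        iverson (IsCubeIso Φ (Function.update a q.1 q.2) (D.erase q.1) (insert j E)) =
        ∑ r ∈ facets (D.erase q.1),
          iverson (IsCubeIso Φ (Function.update (Function.update a q.1 q.2) r.1 r.2)
              ((D.erase q.1).erase r.1) E ∧
            Set.MapsTo Φ (subcube (Function.update (Function.update a q.1 q.2) r.1 r.2)
              ↑((D.erase q.1).erase r.1)) (subcube (fun _ => false) {j}ᶜ)) := by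
      have hΦq := hΦ.mono (subcube_facet_subset q.2 (mem_facets.1 hq))
      have hcardq : (D.erase q.1).card = E.card + 1 := by
        rw [Finset.card_erase_of_mem (mem_facets.1 hq), hcard, Finset.card_insert_of_notMem hj,
          Nat.add_sub_cancel]
      rw [sum_facets_iverson_of_sum_eq_zero hΦq (by simpa using hj) (ih hΦq hcardq)]
      have hsubcube : subcube (fun _ => false) (insert j {j}ᶜ) = Set.univ := by
        ext x
        simp only [subcube, Set.mem_ofPred_eq, Set.mem_univ, iff_true]
        grind
      simp [hsubcube, Set.mapsTo_univ]
    rw [Finset.sum_congr rfl fun q hq => hfacet hq]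
    refine sum_facets_facets_eq_zero D fun q r hqr => ?_
    rw [Function.update_comm hqr, Finset.erase_right_comm]

/-- For `Q = E` this compares the coefficients of a cube in `Φ ∂ = ∂ Φ`, where `Φ` acts on
cubical chains modulo 2. -/
theorem sum_facets_iverson (hΦ : WeakHomOn Φ (subcube a D)) (hE : ↑E ⊆ Q)
    (hcard : D.card = E.card + 1) :
    ∑ q ∈ facets D,
        iverson (IsCubeIso Φ (Function.update a q.1 q.2) (D.erase q.1) E ∧
          Set.MapsTo Φ (subcube (Function.update a q.1 q.2) ↑(D.erase q.1)) (subcube b Q)) =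
      iverson (∃ j ∉ Q, IsCubeIso Φ a D (insert j E) ∧
        Set.MapsTo Φ (subcube a D) (subcube b (insert j Q))) :=
  sum_facets_iverson_of_sum_eq_zero hΦ hE (sum_facets_iverson_isCubeIso hΦ hcard)

end Degree

section Cylinder

variable {ι κ : Type*} [DecidableEq ι] [DecidableEq κ]

/-- `Φ` restricts to an isomorphism from the subcube `(a, D)` onto the subcube `(b, E)`. -/
def MapsCubeOnto (Φ : (ι → Bool) → κ → Bool) (a : ι → Bool) (D : Finset ι) (b : κ → Bool)
    (E : Finset κ) : Prop :=
  IsCubeIso Φ a D E ∧ Set.MapsTo Φ (subcube a D) (subcube b E)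

/-- The map on the cylinder over the hypercube `ι → Bool` given by `f` on the bottom and by `g`
on the top; the coordinate `none` is the height. -/
def cylinder (f g : (ι → Bool) → κ → Bool) (y : Option ι → Bool) : κ → Bool :=
  cond (y none) g f (y ∘ some)

/-- The vertex of height `δ` above `x` in the cylinder over the hypercube `ι → Bool`. -/
def atHeight (δ : Bool) (x : ι → Bool) (o : Option ι) : Bool := o.elim δ x

variable {f g : (ι → Bool) → κ → Bool} {X : Set (ι → Bool)} {a : ι → Bool} {D : Finset ι}

omit [DecidableEq ι] [DecidableEq κ] in
theorem weakHomOn_cylinder (hf : WeakHomOn f X) (hg : WeakHomOn g X)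
    (hfg : ∀ x ∈ X, WeakAdj (f x) (g x)) :
    WeakHomOn (cylinder f g) {y | y ∘ some ∈ X} := by
  intro y hy y' hy' hadj
  by_cases hnone : y none = y' none
  · have hadj' : WeakAdj (y ∘ some) (y' ∘ some) := fun i hi j hj =>
      Option.some_injective _ (hadj hi hj)
    unfold cylinder
    rw [← hnone]
    cases y none
    · exact hf _ hy _ hy' hadj'
    · exact hg _ hy _ hy' hadj'
  · have hsome : y ∘ some = y' ∘ some := funext fun i => by
      by_contra hi
      exact Option.some_ne_none i (hadj hi hnone)
    unfold cylinder
    rw [← hsome]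
    cases h : y none <;> cases h' : y' none
    · exact absurd (h.trans h'.symm) hnone
    · exact hfg _ hy
    · exact (hfg _ hy).symm
    · exact absurd (h.trans h'.symm) hnone

omit [DecidableEq ι] [DecidableEq κ] in
theorem mapsTo_cylinder {Y : Set (κ → Bool)} (hf : Set.MapsTo f X Y) (hg : Set.MapsTo g X Y) :
    Set.MapsTo (cylinder f g) {y | y ∘ some ∈ X} Y := by
  intro y hy
  unfold cylinder
  cases y none
  · exact hf hy
  · exact hg hy

omit [DecidableEq ι] in
theorem comp_some_mem_subcube {δ : Bool} {y : Option ι → Bool}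
    (hy : y ∈ subcube (atHeight δ a) ↑(Finset.insertNone D)) : y ∘ some ∈ subcube a D :=
  fun i hi => hy (some i) (by simpa using hi)

theorem coe_insertNone_erase_none (D : Finset ι) :
    (↑((Finset.insertNone D).erase none) : Set (Option ι)) = some '' ↑D := by
  ext o
  cases o <;> simp

theorem subcube_insertNone_facet_none (a : ι → Bool) (D : Finset ι) (δ : Bool) :
    subcube (Function.update (atHeight false a) none δ) ↑((Finset.insertNone D).erase none) =
      atHeight δ '' subcube a D := by
  ext y
  refine ⟨fun hy => ⟨y ∘ some, fun i hi => ?_, ?_⟩, ?_⟩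
  · simpa [atHeight] using hy (some i) (by simpa using hi)
  · funext o
    cases o
    · simpa [atHeight] using (hy none (by simp)).symm
    · rfl
  · rintro ⟨x, hx, rfl⟩ o ho
    cases o
    · simp [atHeight]
    · simpa [atHeight] using hx _ (by simpa using ho)

theorem flipAt_some_atHeight (l : ι) (δ : Bool) (x : ι → Bool) :
    flipAt (some l) (atHeight δ x) = atHeight δ (flipAt l x) := by
  funext o
  cases o <;> simp [flipAt, atHeight, Function.update_apply]

omit [DecidableEq ι] [DecidableEq κ] in
theorem cylinder_atHeight (δ : Bool) (x : ι → Bool) :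
    cylinder f g (atHeight δ x) = cond δ g f x := by
  cases δ <;> rfl

theorem isCubeIso_cylinder_facet_none [Nonempty (κ → ι)] {E : Finset κ} (δ : Bool) :
    IsCubeIso (cylinder f g) (Function.update (atHeight false a) none δ)
        ((Finset.insertNone D).erase none) E ↔
      IsCubeIso (cond δ g f) a D E := by
  obtain ⟨p₀⟩ := ‹Nonempty (κ → ι)›
  rw [IsCubeIso, IsCubeIso, subcube_insertNone_facet_none, coe_insertNone_erase_none]
  simp only [Set.forall_mem_image, cylinder_atHeight]
  refine ⟨fun ⟨p, hp, hΦ⟩ => ?_, fun ⟨p, hp, hΦ⟩ => ?_⟩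
  · have hsome {j : κ} (hj : j ∈ E) : some ((p j).getD (p₀ j)) = p j := by
      obtain ⟨l, -, hl⟩ := hp.mapsTo hj
      simp [← hl]
    have hbij := hp.congr fun j hj => (hsome hj).symm
    refine ⟨fun j => (p j).getD (p₀ j), ⟨?_, ?_, ?_⟩, fun j hj x hx => ?_⟩
    · exact fun j hj => (Option.some_injective ι).mem_set_image.1 (hbij.mapsTo hj)
    · exact fun i hi j hj h => hbij.injOn hi hj (congrArg some h)
    · intro l hl
      obtain ⟨j, hj, h⟩ := hbij.surjOn (Set.mem_image_of_mem some hl)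
      exact ⟨j, hj, Option.some_injective ι h⟩
    · rw [← hΦ j hj hx, ← hsome hj, flipAt_some_atHeight, cylinder_atHeight]
  · refine ⟨some ∘ p, (Option.some_injective ι).injOn.bijOn_image.comp hp, fun j hj x hx => ?_⟩
    rw [Function.comp_apply, flipAt_some_atHeight, cylinder_atHeight, hΦ j hj x hx]

theorem mapsCubeOnto_cylinder_facet_none [Nonempty (κ → ι)] {b : κ → Bool} {E : Finset κ}
    (δ : Bool) :
    MapsCubeOnto (cylinder f g) (Function.update (atHeight false a) none δ)
        ((Finset.insertNone D).erase none) b E ↔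
      MapsCubeOnto (cond δ g f) a D b E := by
  rw [MapsCubeOnto, MapsCubeOnto, isCubeIso_cylinder_facet_none, subcube_insertNone_facet_none,
    Set.mapsTo_image_iff]
  simp only [Set.MapsTo, Function.comp_apply, cylinder_atHeight]

end Cylinder

section Lefschetz

variable {κ : Type*}

/-- A cube contained in `X`. The coordinates of `corner` in the free directions are normalised to
be `false`, so that distinct terms of this type have distinct sets of vertices. -/
@[ext]
structure CubeIn (X : Set (κ → Bool)) where
  corner : κ → Bool
  dirs : Finset κ
  corner_eq_false : ∀ i ∈ dirs, corner i = false
  subcube_subset : subcube corner dirs ⊆ X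

variable {X : Set (κ → Bool)} {f g : (κ → Bool) → κ → Bool}

instance [Finite X] : Finite (CubeIn X) := by
  classical
  let top (σ : CubeIn X) : κ → Bool := fun i => σ.corner i || decide (i ∈ σ.dirs)
  have htop (σ : CubeIn X) : top σ ∈ X := σ.subcube_subset fun i hi => by simp_all [top]
  refine Finite.of_injective (β := X × X) (fun σ =>
    (⟨σ.corner, σ.subcube_subset (self_mem_subcube _ _)⟩, ⟨top σ, htop σ⟩)) fun σ τ h => ?_
  simp only [Prod.mk.injEq, Subtype.mk.injEq] at h
  refine CubeIn.ext h.1 (Finset.ext fun i => ?_)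
  have hi := congrFun h.2 i
  have hσ := σ.corner_eq_false i
  have hτ := τ.corner_eq_false i
  simp only [top, h.1] at hi hσ
  by_cases hiσ : i ∈ σ.dirs <;> by_cases hiτ : i ∈ τ.dirs <;> simp_all

noncomputable instance [Finite X] : Fintype (CubeIn X) := Fintype.ofFinite _

variable [DecidableEq κ]

/-- The facet of `σ` on which the coordinate `q.1` is `q.2`. -/
def CubeIn.facet (σ : CubeIn X) (q : κ × Bool) (hq : q.1 ∈ σ.dirs) : CubeIn X where
  corner := Function.update σ.corner q.1 q.2
  dirs := σ.dirs.erase q.1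
  corner_eq_false i hi := by
    rw [Function.update_of_ne (Finset.ne_of_mem_erase hi)]
    exact σ.corner_eq_false i (Finset.mem_of_mem_erase hi)
  subcube_subset := (subcube_facet_subset q.2 hq).trans σ.subcube_subset

/-- The Lefschetz number modulo `2` of `f` on the cubes contained in `X`: the number of cubes
which `f` maps isomorphically onto themselves. Over `ZMod 2` orientations play no role. -/
noncomputable def lefschetz (X : Set (κ → Bool)) [Finite X] (f : (κ → Bool) → κ → Bool) : ZMod 2 :=
  ∑ σ : CubeIn X, iverson (MapsCubeOnto f σ.corner σ.dirs σ.corner σ.dirs)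

/-- The coefficient of the cube `(b, E)` in the image of the prism over the cube `(a, D)` under
the homotopy from `f` to `g`. -/
def PrismMapsOnto (f g : (κ → Bool) → κ → Bool) (a : κ → Bool) (D : Finset κ) (b : κ → Bool)
    (E : Finset κ) : Prop :=
  MapsCubeOnto (cylinder f g) (atHeight false a) (Finset.insertNone D) b E

omit [DecidableEq κ] in
theorem sum_facets_insertNone {M : Type*} [AddCommMonoid M] (D : Finset κ)
    (F : Option κ × Bool → M) :
    ∑ q ∈ facets (Finset.insertNone D), F q =
      ∑ δ, F (none, δ) + ∑ q ∈ facets D, F (some q.1, q.2) := by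
  simp [facets, Finset.sum_product, Finset.sum_insertNone]

/-- The homotopy formula `f - g = ∂ P + P ∂` for the prism operator `P`, one matrix entry at a
time. -/
theorem iverson_add_iverson_add_sum_prism {a b : κ → Bool} {D E : Finset κ}
    (hcard : D.card = E.card)
    (hf : WeakHomOn f (subcube a D)) (hg : WeakHomOn g (subcube a D))
    (hfg : ∀ x ∈ subcube a D, WeakAdj (f x) (g x)) :
    iverson (MapsCubeOnto g a D b E) + iverson (MapsCubeOnto f a D b E) +
        ∑ q ∈ facets D,
          iverson (PrismMapsOnto f g (Function.update a q.1 q.2) (D.erase q.1) b E) =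
      iverson (∃ j ∉ E, PrismMapsOnto f g a D b (insert j E)) := by
  have : Nonempty (κ → κ) := ⟨id⟩
  have hnone (δ : Bool) := mapsCubeOnto_cylinder_facet_none (f := f) (g := g) (a := a) (b := b)
    (D := D) (E := E) δ
  have hsome (l : κ) (δ : Bool) : Function.update (atHeight false a) (some l) δ =
      atHeight false (Function.update a l δ) := by
    funext o
    cases o <;> simp [atHeight, Function.update_apply]
  have herase (l : κ) :
      (Finset.insertNone D).erase (some l) = Finset.insertNone (D.erase l) := by
    ext o
    cases o <;> simp
  have hcyl : WeakHomOn (cylinder f g) (subcube (atHeight false a) ↑(Finset.insertNone D)) :=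
    (weakHomOn_cylinder hf hg hfg).mono fun y hy => comp_some_mem_subcube hy
  have hU := sum_facets_iverson (b := b) hcyl (subset_refl (E : Set κ))
    (by rw [Finset.card_insertNone, hcard])
  simp only [PrismMapsOnto, MapsCubeOnto] at hnone ⊢
  simp only [sum_facets_insertNone, hnone, hsome, herase, Fintype.sum_bool, cond_true, cond_false,
    Finset.mem_coe, ← Finset.coe_insert] at hU
  exact hU

theorem exists_cofacet_iff (hf : Set.MapsTo f X X) (hg : Set.MapsTo g X X) (σ : CubeIn X) :
    (∃ (τ : CubeIn X) (q : κ × Bool), (∃ hq : q.1 ∈ τ.dirs, τ.facet q hq = σ) ∧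
        PrismMapsOnto f g σ.corner σ.dirs τ.corner τ.dirs) ↔
      ∃ j ∉ σ.dirs, PrismMapsOnto f g σ.corner σ.dirs σ.corner (insert j σ.dirs) := by
  constructor
  · rintro ⟨τ, ⟨j, δ⟩, ⟨hj, rfl⟩, hiso, hmaps⟩
    have hinsert : insert j (τ.facet (j, δ) hj).dirs = τ.dirs := Finset.insert_erase hj
    refine ⟨j, Finset.notMem_erase j τ.dirs, ?_⟩
    rw [hinsert]
    have hcorner := subcube_eq_of_mem (update_mem_subcube δ hj (self_mem_subcube τ.corner _))
    exact ⟨hiso, hmaps.mono_right hcorner.ge⟩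
  · rintro ⟨j, hj, hiso, hmaps⟩
    have hcorner := subcube_eq_of_mem
      (update_mem_subcube false (Finset.mem_insert_self j σ.dirs)
      (self_mem_subcube σ.corner _))
    let τ : CubeIn X := {
      corner := Function.update σ.corner j false
      dirs := insert j σ.dirs
      corner_eq_false := fun i hi => by
        rcases eq_or_ne i j with rfl | hij
        · simp
        · rw [Function.update_of_ne hij]
          exact σ.corner_eq_false i (Finset.mem_of_mem_insert_of_ne hi hij)
      subcube_subset := by
        rw [hcorner, ← subcube_eq_of_mem (hmaps (self_mem_subcube _ _))]
        refine hiso.subcube_subset_image.trans (Set.image_subset_iff.2 fun y hy => ?_)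
        exact mapsTo_cylinder hf hg (σ.subcube_subset (comp_some_mem_subcube hy)) }
    refine ⟨τ, (j, σ.corner j), ⟨Finset.mem_insert_self j σ.dirs, ?_⟩, hiso, ?_⟩
    · exact CubeIn.ext (by simp [τ, CubeIn.facet]) (Finset.erase_insert hj)
    · rwa [hcorner]

theorem cofacet_unique {σ τ τ' : CubeIn X} {q q' : κ × Bool}
    (h : ∃ hq : q.1 ∈ τ.dirs, τ.facet q hq = σ) (h' : ∃ hq : q'.1 ∈ τ'.dirs, τ'.facet q' hq = σ)
    (hP : PrismMapsOnto f g σ.corner σ.dirs τ.corner τ.dirs)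
    (hP' : PrismMapsOnto f g σ.corner σ.dirs τ'.corner τ'.dirs) : τ = τ' ∧ q = q' := by
  have hdirs : τ.dirs = τ'.dirs := Finset.Subset.antisymm
    (fun j hj => hP.1.mem_of_mapsTo hP'.2 hj) (fun j hj => hP'.1.mem_of_mapsTo hP.2 hj)
  obtain ⟨j, δ⟩ := q
  obtain ⟨j', δ'⟩ := q'
  obtain ⟨hj, rfl⟩ := h
  obtain ⟨hj', hfacet⟩ := h'
  obtain ⟨hcorner, herase⟩ := CubeIn.ext_iff.1 hfacet
  simp only [CubeIn.facet] at hcorner herase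
  obtain rfl : j = j' := by
    by_contra hne
    exact Finset.notMem_erase j τ.dirs (herase ▸ Finset.mem_erase.2 ⟨hne, hdirs ▸ hj⟩)
  refine ⟨CubeIn.ext (funext fun i => ?_) hdirs, ?_⟩
  · rcases eq_or_ne i j with rfl | hij
    · rw [τ.corner_eq_false i hj, τ'.corner_eq_false i hj']
    · simpa [hij] using (congrFun hcorner i).symm
  · simpa using (congrFun hcorner j).symm

variable [Finite X]

theorem sum_facets_cofacets (P : CubeIn X → CubeIn X → Prop) :
    ∑ σ, ∑ x ∈ Finset.univ.sigma fun τ : CubeIn X => facets τ.dirs,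
      iverson ((∃ hq : x.2.1 ∈ x.1.dirs, x.1.facet x.2 hq = σ) ∧ P σ x.1) =
    ∑ τ : CubeIn X, ∑ q ∈ (facets τ.dirs).attach,
      iverson (P (τ.facet q (mem_facets.1 q.2)) τ) := by
  rw [Finset.sum_comm, Finset.sum_sigma]
  refine Finset.sum_congr rfl fun τ _ => ?_
  rw [← Finset.sum_attach]
  refine Finset.sum_congr rfl fun q _ => ?_
  rw [Finset.sum_eq_single_of_mem (τ.facet q (mem_facets.1 q.2)) (Finset.mem_univ _)]
  · exact congrArg iverson (propext ⟨fun h => h.2, fun h => ⟨⟨_, rfl⟩, h⟩⟩)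
  · rintro σ - hσ
    exact iverson_of_not fun ⟨⟨_, h⟩, _⟩ => hσ h.symm

theorem lefschetz_eq_of_weakAdj (hf : WeakHomOn f X) (hg : WeakHomOn g X)
    (hfX : Set.MapsTo f X X) (hgX : Set.MapsTo g X X) (hfg : ∀ x ∈ X, WeakAdj (f x) (g x)) :
    lefschetz X f = lefschetz X g := by
  have hcofacets (σ : CubeIn X) :
      iverson (∃ j ∉ σ.dirs, PrismMapsOnto f g σ.corner σ.dirs σ.corner (insert j σ.dirs)) =
        ∑ x ∈ Finset.univ.sigma fun τ : CubeIn X => facets τ.dirs,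
          iverson ((∃ hq : x.2.1 ∈ x.1.dirs, x.1.facet x.2 hq = σ) ∧
            PrismMapsOnto f g σ.corner σ.dirs x.1.corner x.1.dirs) := by
    rw [← exists_cofacet_iff hfX hgX, sum_iverson_of_subsingleton]
    · exact congrArg iverson (propext
        ⟨fun ⟨τ, q, ⟨hq, hσ⟩, hP⟩ => ⟨⟨τ, q⟩, by simpa using hq, ⟨hq, hσ⟩, hP⟩,
          fun ⟨⟨τ, q⟩, _, h⟩ => ⟨τ, q, h⟩⟩)
    · rintro ⟨τ, q⟩ - ⟨τ', q'⟩ - ⟨h, hP⟩ ⟨h', hP'⟩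
      obtain ⟨rfl, rfl⟩ := cofacet_unique h h' hP hP'
      rfl
  have hformula (σ : CubeIn X) :=
    (iverson_add_iverson_add_sum_prism (b := σ.corner) (D := σ.dirs) rfl
      (hf.mono σ.subcube_subset) (hg.mono σ.subcube_subset)
      fun x hx => hfg x (σ.subcube_subset hx)).trans (hcofacets σ)
  have hsum := Finset.sum_congr (rfl : (Finset.univ : Finset (CubeIn X)) = _)
    fun σ _ => hformula σ
  rw [sum_facets_cofacets fun σ τ => PrismMapsOnto f g σ.corner σ.dirs τ.corner τ.dirs,
    Finset.sum_add_distrib, Finset.sum_add_distrib] at hsum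
  refine (CharTwo.add_eq_zero.1 (add_eq_right.1 (hsum.trans ?_))).symm
  refine Finset.sum_congr rfl fun τ _ => ?_
  exact Finset.sum_attach (facets τ.dirs) fun q =>
    iverson (PrismMapsOnto f g (Function.update τ.corner q.1 q.2) (τ.dirs.erase q.1)
      τ.corner τ.dirs)

theorem lefschetz_eq_one_of_const {b : κ → Bool} (hb : b ∈ X) (hf : ∀ x ∈ X, f x = b) :
    lefschetz X f = 1 := by
  have hbX : subcube b ↑(∅ : Finset κ) ⊆ X := fun x hx => by
    rwa [show x = b from funext fun i => hx i (by simp)]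
  have hfix (σ : CubeIn X) : MapsCubeOnto f σ.corner σ.dirs σ.corner σ.dirs ↔
      σ = ⟨b, ∅, by simp, hbX⟩ := by
    have hself := self_mem_subcube σ.corner σ.dirs
    refine ⟨fun ⟨⟨p, hp, hiso⟩, hmaps⟩ => ?_, ?_⟩
    · have hdirs : σ.dirs = ∅ := Finset.eq_empty_of_forall_notMem fun j hj => by
        have hflip := congrFun (hiso j hj _ hself) j
        rw [hf _ (σ.subcube_subset hself), flipAt_same,
          hf _ (σ.subcube_subset (flipAt_mem_subcube (hp.mapsTo hj) hself))] at hflip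
        exact Bool.not_ne_self _ hflip.symm
      refine CubeIn.ext (funext fun i => ?_) hdirs
      rw [← hmaps hself i (by simp [hdirs]), hf _ (σ.subcube_subset hself)]
    · rintro rfl
      have : Nonempty (κ → κ) := ⟨id⟩
      exact ⟨IsCubeIso.of_empty f b, fun x hx => by simpa [hf x (hbX hx)] using hself⟩
  simp only [lefschetz, hfix]
  rw [sum_iverson_of_subsingleton _ fun σ _ τ _ hσ hτ => hσ.trans hτ.symm]
  exact iverson_of ⟨_, Finset.mem_univ _, rfl⟩

theorem exists_mapsCubeOnto_of_homotopic_const {k : ℕ} {h : ℕ → (κ → Bool) → κ → Bool}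
    {b : κ → Bool} (hb : b ∈ X) (hmaps : ∀ t ≤ k, Set.MapsTo (h t) X X)
    (hhom : ∀ t ≤ k, WeakHomOn (h t) X)
    (hadj : ∀ t < k, ∀ x ∈ X, WeakAdj (h t x) (h (t + 1) x)) (hconst : ∀ x ∈ X, h k x = b) :
    ∃ σ : CubeIn X, MapsCubeOnto (h 0) σ.corner σ.dirs σ.corner σ.dirs := by
  have hlef : ∀ t ≤ k, lefschetz X (h t) = lefschetz X (h 0) := fun t ht => by
    induction t with
    | zero => rfl
    | succ t ih =>
      rw [← ih (by lia)]
      exact (lefschetz_eq_of_weakAdj (hhom t (by lia)) (hhom _ ht) (hmaps t (by lia))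
        (hmaps _ ht) (hadj t ht)).symm
  have hne : lefschetz X (h 0) ≠ 0 := by
    rw [← hlef k le_rfl, lefschetz_eq_one_of_const hb hconst]
    exact one_ne_zero
  obtain ⟨σ, -, hσ⟩ := Finset.exists_ne_zero_of_sum_ne_zero hne
  exact ⟨σ, iverson_ne_zero.1 hσ⟩

end Lefschetz

section Thresholds

variable {ι : Type*}

/-- The embedding of `ℤ^ι` into a hypercube which records the truth values of all inequalities
`s < x i`. -/
def thresholds (x : ι → ℤ) (q : (_ : ι) × ℤ) : Bool := decide (q.2 < x q.1)

theorem thresholds_injective : Function.Injective (thresholds (ι := ι)) := by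
  intro x y h
  funext i
  have hx := congrFun h ⟨i, x i⟩
  have hy := congrFun h ⟨i, y i⟩
  simp only [thresholds, lt_self_iff_false, decide_false, false_eq_decide_iff,
    decide_eq_false_iff_not] at hx hy
  lia

theorem setOf_thresholds_ne [Fintype ι] (x y : ι → ℤ) : {q | thresholds x q ≠ thresholds y q} =
    (Finset.univ.sigma fun i => Finset.Ico (min (x i) (y i)) (max (x i) (y i)) :
      Finset ((_ : ι) × ℤ)) := by
  ext ⟨i, s⟩
  simp only [thresholds, Set.mem_ofPred_eq, ne_eq, decide_eq_decide, Finset.coe_sigma,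
    Finset.mem_coe, Set.mem_sigma_iff, Finset.mem_univ, Finset.mem_Ico, true_and]
  lia

theorem weakAdj_thresholds_iff {n : ℕ} {x y : Fin n → ℤ} :
    WeakAdj (thresholds x) (thresholds y) ↔ x = y ∨ c1Adj x y := by
  have hcard : ((Finset.univ.sigma fun i => Finset.Ico (min (x i) (y i)) (max (x i) (y i)) :
      Finset ((_ : Fin n) × ℤ)).card : ℤ) = ∑ i, |x i - y i| := by
    simp [Finset.card_sigma, max_sub_min_eq_abs']
  have heq : x = y ↔ ∑ i, |x i - y i| = 0 := by
    rw [Finset.sum_eq_zero_iff_of_nonneg fun i _ => abs_nonneg _, funext_iff]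
    simp [sub_eq_zero]
  rw [WeakAdj, setOf_thresholds_ne, ← Finset.card_le_one_iff_subsingleton, heq, c1Adj, ← hcard]
  lia

theorem eq_of_subcube_subset_range_thresholds {a : (_ : ι) × ℤ → Bool} {D : Set ((_ : ι) × ℤ)}
    (h : subcube a D ⊆ Set.range thresholds) {i : ι} {s t : ℤ} (hs : ⟨i, s⟩ ∈ D)
    (ht : ⟨i, t⟩ ∈ D) : s = t := by
  classical
  wlog hst : s < t generalizing s t
  · by_contra hne
    exact hne (this ht hs (by lia)).symm
  obtain ⟨x, hx⟩ := h (show Function.update (Function.update a ⟨i, s⟩ false) ⟨i, t⟩ true ∈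
    subcube a D from
      update_mem_subcube _ ht (update_mem_subcube _ hs (self_mem_subcube a D)))
  have hxs : thresholds x ⟨i, s⟩ = false := by simp [hx, hst.ne]
  have hxt : thresholds x ⟨i, t⟩ = true := by simp [hx]
  simp only [thresholds, decide_eq_false_iff_not, decide_eq_true_eq] at hxs hxt
  lia

theorem nApproxFix_of_subcube {n : ℕ} {X : Finset (Fin n → ℤ)} {f : (Fin n → ℤ) → Fin n → ℤ}
    {a : (_ : Fin n) × ℤ → Bool} {D : Set ((_ : Fin n) × ℤ)}
    (h : subcube a D ⊆ thresholds '' X) {x : Fin n → ℤ} (hx : thresholds x ∈ subcube a D)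
    (hfx : thresholds (f x) ∈ subcube a D) : nApproxFix X f n x := by
  let p (t : ℕ) (i : Fin n) : ℤ := if i < t then f x i else x i
  have hp (t : ℕ) : thresholds (p t) ∈ subcube a D := by
    rintro ⟨i, s⟩ hq
    by_cases hi : i < t
    · simpa [thresholds, p, hi] using hfx ⟨i, s⟩ hq
    · simpa [thresholds, p, hi] using hx ⟨i, s⟩ hq
  have hpX (t : ℕ) : p t ∈ X := by
    obtain ⟨z, hz, hzp⟩ := h (hp t)
    rwa [← thresholds_injective hzp]
  have hstep (t : ℕ) : WeakAdj (thresholds (p t)) (thresholds (p (t + 1))) := by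
    have hdiff {i : Fin n} {s : ℤ} (hne : thresholds (p t) ⟨i, s⟩ ≠ thresholds (p (t + 1)) ⟨i, s⟩) :
        i = t ∧ ⟨i, s⟩ ∈ D := by
      constructor
      · by_contra hi
        have hlt : i < t ↔ i < t + 1 := by lia
        exact hne (by simp [thresholds, p, hlt])
      · by_contra hD
        exact hne ((hp t _ hD).trans (hp (t + 1) _ hD).symm)
    rintro ⟨i, s⟩ hi ⟨j, s'⟩ hj
    obtain ⟨rfl, hiD⟩ := hdiff hi
    obtain ⟨hj', hjD⟩ := hdiff hj
    obtain rfl : j = i := Fin.ext hj'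
    rw [eq_of_subcube_subset_range_thresholds (h.trans (Set.image_subset_range _ _)) hiD hjD]
  exact ⟨n, p, le_rfl, by simp [p], by simp [p], fun t _ => hpX t,
    fun t _ => weakAdj_thresholds_iff.1 (hstep t)⟩

theorem c1Homotopic.comp_left {n m k : ℕ} {X : Finset (Fin n → ℤ)} {Y : Finset (Fin m → ℤ)}
    {Z : Finset (Fin k → ℤ)} {g g' : (Fin n → ℤ) → Fin m → ℤ} {f : (Fin m → ℤ) → Fin k → ℤ}
    (h : c1Homotopic X Y g g') (hf : MapsInto Y Z f) (hfc : c1Cont Y f) :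
    c1Homotopic X Z (f ∘ g) (f ∘ g') := by
  obtain ⟨l, H, hmem, hzero, hlast, hstep, hcont⟩ := h
  have hcomp {y z : Fin m → ℤ} (hy : y ∈ Y) (hz : z ∈ Y) (hyz : y = z ∨ c1Adj y z) :
      f y = f z ∨ c1Adj (f y) (f z) :=
    hyz.elim (fun e => Or.inl (congrArg f e)) (hfc y hy z hz)
  exact ⟨l, fun x t => f (H x t), fun x hx t ht => hf _ (hmem x hx t ht),
    fun x hx => congrArg f (hzero x hx), fun x hx => congrArg f (hlast x hx),
    fun x hx t ht => hcomp (hmem x hx t (by lia)) (hmem x hx (t + 1) ht) (hstep x hx t ht),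
    fun t ht x hx x' hx' hadj =>
      hcomp (hmem x hx t ht) (hmem x' hx' t ht) (hcont t ht x hx x' hx' hadj)⟩

theorem exists_mapsTo_subcube_of_c1Homotopic_const {n : ℕ} {X : Finset (Fin n → ℤ)}
    {f : (Fin n → ℤ) → Fin n → ℤ} {x₀ : Fin n → ℤ} (hx₀ : x₀ ∈ X)
    (hf : c1Homotopic X X f fun _ => x₀) :
    ∃ σ : CubeIn (thresholds '' (X : Set (Fin n → ℤ))), ∀ x ∈ X,
      thresholds x ∈ subcube σ.corner σ.dirs → thresholds (f x) ∈ subcube σ.corner σ.dirs := by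
  obtain ⟨k, H, hmem, hzero, hlast, hstep, hcont⟩ := hf
  let F (t : ℕ) (v : (_ : Fin n) × ℤ → Bool) : (_ : Fin n) × ℤ → Bool :=
    thresholds (H (Function.invFun thresholds v) t)
  have hF (t : ℕ) (x : Fin n → ℤ) : F t (thresholds x) = thresholds (H x t) := by
    simp only [F, Function.leftInverse_invFun thresholds_injective x]
  have hmaps : ∀ t ≤ k, Set.MapsTo (F t) (thresholds '' X) (thresholds '' X) := by
    rintro t ht _ ⟨x, hx, rfl⟩
    exact hF t x ▸ Set.mem_image_of_mem thresholds (hmem x hx t ht)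
  have hhom : ∀ t ≤ k, WeakHomOn (F t) (thresholds '' X) := by
    rintro t ht _ ⟨x, hx, rfl⟩ _ ⟨y, hy, rfl⟩ hxy
    rw [hF, hF, weakAdj_thresholds_iff]
    exact (weakAdj_thresholds_iff.1 hxy).elim (fun e => Or.inl (by rw [e])) (hcont t ht x hx y hy)
  have hadj : ∀ t < k, ∀ v ∈ thresholds '' (X : Set (Fin n → ℤ)),
      WeakAdj (F t v) (F (t + 1) v) := by
    rintro t ht _ ⟨x, hx, rfl⟩
    rw [hF, hF, weakAdj_thresholds_iff]
    exact hstep x hx t ht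
  have hconst : ∀ v ∈ thresholds '' (X : Set (Fin n → ℤ)), F k v = thresholds x₀ := by
    rintro _ ⟨x, hx, rfl⟩
    rw [hF, hlast x hx]
  obtain ⟨σ, -, hσ⟩ := exists_mapsCubeOnto_of_homotopic_const
    (Set.mem_image_of_mem thresholds hx₀) hmaps hhom hadj hconst
  refine ⟨σ, fun x hx hxσ => ?_⟩
  rw [← hzero x hx, ← hF]
  exact hσ hxσ

end Thresholds

theorem fixed_or_napprox_of_contractible_general {n : ℕ} {X : Finset (Fin n → ℤ)}
    {f : (Fin n → ℤ) → Fin n → ℤ} {x₀ : Fin n → ℤ} (hx₀ : x₀ ∈ X)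
    (hf : c1Homotopic X X f fun _ => x₀) :
    (∃ x ∈ X, f x = x) ∨
      ∃ x ∈ X, ∃ y ∈ X, x ≠ y ∧ nApproxFix X f n x ∧ nApproxFix X f n y := by
  obtain ⟨σ, hσ⟩ := exists_mapsTo_subcube_of_c1Homotopic_const hx₀ hf
  obtain ⟨x, hx, hxσ⟩ := σ.subcube_subset (self_mem_subcube σ.corner σ.dirs)
  have hxmem : thresholds x ∈ subcube σ.corner σ.dirs := hxσ ▸ self_mem_subcube _ _
  have happrox {z : Fin n → ℤ} (hz : z ∈ X) (hzσ : thresholds z ∈ subcube σ.corner σ.dirs) :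
      nApproxFix X f n z := nApproxFix_of_subcube σ.subcube_subset hzσ (hσ z hz hzσ)
  rcases σ.dirs.eq_empty_or_nonempty with hdirs | ⟨j, hj⟩
  · refine Or.inl ⟨x, hx, thresholds_injective (funext fun i => ?_)⟩
    rw [hσ x hx hxmem i (by simp [hdirs]), hxσ]
  · have hflip := flipAt_mem_subcube (Finset.mem_coe.2 hj) hxmem
    obtain ⟨y, hy, hyσ⟩ := σ.subcube_subset hflip
    refine Or.inr ⟨x, hx, y, hy, ?_, happrox hx hxmem, happrox hy (hyσ ▸ hflip)⟩
    rintro rfl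
    simpa using congrFun hyσ j

/-- Let `X ⊆ ℤ^n` (`n ≤ 3`) be a finite contractible digital image with `c1`-adjacency.
Then every `c1`-continuous self-map `f : X → X` has a fixed point or at least two distinct
`n`-approximate fixed points. -/
theorem fixed_or_napprox_of_contractible {n : ℕ} (hn : n ≤ 3) (X : Finset (Fin n → ℤ))
    (hX : c1Contractible X) :
    ∀ f : (Fin n → ℤ) → (Fin n → ℤ), MapsInto X X f → c1Cont X f →
      (∃ x ∈ X, f x = x) ∨
        ∃ x ∈ X, ∃ y ∈ X, x ≠ y ∧ nApproxFix X f n x ∧ nApproxFix X f n y := by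
  obtain ⟨x₀, hx₀, hid⟩ := hX
  exact fun f hf hfc =>
    fixed_or_napprox_of_contractible_general (hf x₀ hx₀) (hid.comp_left hf hfc)
end

section
/- Let n ≥ 1, let X = {0,1}^n ⊆ ℤ^n with c1-adjacency, and let f : X → X be the antipodal map f(t_1,…,t_n) = (1−t_1,…,1−t_n). Then every point of X is an n-approximate fixed point of f, and no point of X is a k-approximate fixed point of f for any k < n; equivalently, every c1-path in X from a point x to f(x) has length at least n, and such a path of length exactly n exists. -/
/-!
A path changes the `ℓ¹`-distance to its starting point by at most one per step, and in a box one
can always step towards a given point of the box; so inside a box the least length of a `c1`-path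
between two points is their `ℓ¹`-distance. An elementary cube is a box, and the antipodal map moves
each of its points by exactly one in every nondegenerate direction.
-/

section C1Dist

variable {n : ℕ}

/-- The `ℓ¹`-distance on `ℤ^n`, so that `c1Adj x y` is `c1Dist x y = 1`. -/
def c1Dist (x y : Fin n → ℤ) : ℤ := ∑ i, |x i - y i|

@[simp]
theorem c1Dist_self (x : Fin n → ℤ) : c1Dist x x = 0 := by simp [c1Dist]

theorem c1Dist_comm (x y : Fin n → ℤ) : c1Dist x y = c1Dist y x := by
  simp only [c1Dist, abs_sub_comm]

theorem c1Dist_triangle (x y z : Fin n → ℤ) : c1Dist x z ≤ c1Dist x y + c1Dist y z := by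
  simp only [c1Dist, ← Finset.sum_add_distrib]
  exact Finset.sum_le_sum fun i _ => abs_sub_le (x i) (y i) (z i)

theorem c1Dist_pos {x y : Fin n → ℤ} (h : x ≠ y) : 0 < c1Dist x y := by
  obtain ⟨i, hi⟩ := Function.ne_iff.1 h
  exact Finset.sum_pos' (fun j _ => abs_nonneg _) ⟨i, Finset.mem_univ i, abs_sub_pos.2 hi⟩

theorem c1Dist_update_add (x y : Fin n → ℤ) (i : Fin n) (c : ℤ) :
    c1Dist (Function.update x i c) y + |x i - y i| = c1Dist x y + |c - y i| := by
  have off_i : ∑ j ∈ Finset.univ.erase i, |Function.update x i c j - y j| =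
      ∑ j ∈ Finset.univ.erase i, |x j - y j| :=
    Finset.sum_congr rfl fun j hj => by rw [Function.update_of_ne (Finset.ne_of_mem_erase hj)]
  simp only [c1Dist, ← Finset.sum_erase_add _ _ (Finset.mem_univ i), off_i, Function.update_self]
  ring

theorem c1Adj_update {x : Fin n → ℤ} {i : Fin n} {c : ℤ} (h : |c - x i| = 1) :
    c1Adj x (Function.update x i c) := by
  have := c1Dist_update_add x x i c
  rwa [sub_self, abs_zero, add_zero, c1Dist_self, zero_add, h, c1Dist_comm] at this

end C1Dist

section Path

variable {n m : ℕ} {X : Finset (Fin n → ℤ)} {x y : Fin n → ℤ}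

/-- There is a `c1`-path of length `m` in `X` from `x` to `y`; as in `nApproxFix`, consecutive
points may coincide. -/
def HasC1Path (X : Finset (Fin n → ℤ)) (m : ℕ) (x y : Fin n → ℤ) : Prop :=
  ∃ p : ℕ → (Fin n → ℤ), p 0 = x ∧ p m = y ∧ (∀ t ≤ m, p t ∈ X) ∧
    ∀ t, t + 1 ≤ m → (p t = p (t + 1) ∨ c1Adj (p t) (p (t + 1)))

theorem nApproxFix_iff_hasC1Path {f : (Fin n → ℤ) → (Fin n → ℤ)} {k : ℕ} :
    nApproxFix X f k x ↔ ∃ m ≤ k, HasC1Path X m x (f x) := by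
  simp only [nApproxFix, HasC1Path, exists_and_left]

theorem hasC1Path_zero_iff : HasC1Path X 0 x y ↔ x ∈ X ∧ x = y := by
  constructor
  · rintro ⟨p, rfl, rfl, mem, -⟩
    exact ⟨mem 0 le_rfl, rfl⟩
  · rintro ⟨hx, rfl⟩
    exact ⟨fun _ => x, rfl, rfl, fun _ _ => hx, fun _ _ => .inl rfl⟩

theorem hasC1Path_succ_iff :
    HasC1Path X (m + 1) x y ↔ x ∈ X ∧ ∃ z, (x = z ∨ c1Adj x z) ∧ HasC1Path X m z y := by
  constructor
  · rintro ⟨p, rfl, rfl, mem, step⟩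
    exact ⟨mem 0 (by lia), p 1, step 0 (by lia), fun t => p (t + 1), rfl, rfl,
      fun t ht => mem (t + 1) (by lia), fun t ht => step (t + 1) (by lia)⟩
  · rintro ⟨hx, _, first, p, rfl, rfl, mem, step⟩
    refine ⟨fun t => Nat.casesOn t x p, rfl, rfl, ?_, ?_⟩
    · rintro (_ | t) ht
      exacts [hx, mem t (by lia)]
    · rintro (_ | t) ht
      exacts [first, step t (by lia)]

theorem HasC1Path.c1Dist_le (h : HasC1Path X m x y) : c1Dist x y ≤ m := by
  induction m generalizing x with
  | zero =>
    obtain ⟨-, rfl⟩ := hasC1Path_zero_iff.1 h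
    simp
  | succ m ih =>
    obtain ⟨-, z, first, rest⟩ := hasC1Path_succ_iff.1 h
    have first_le : c1Dist x z ≤ 1 := by
      rcases first with rfl | adj
      · simp
      · exact adj.le
    calc c1Dist x y ≤ c1Dist x z + c1Dist z y := c1Dist_triangle x z y
      _ ≤ 1 + m := add_le_add first_le (ih rest)
      _ = ↑(m + 1) := by push_cast; ring

end Path

section Box

variable {n : ℕ} {a b x y : Fin n → ℤ}

theorem exists_c1Adj_mem_Icc_c1Dist_add_one (hx : x ∈ Finset.Icc a b) (hy : y ∈ Finset.Icc a b)
    (hxy : x ≠ y) : ∃ z ∈ Finset.Icc a b, c1Adj x z ∧ c1Dist z y + 1 = c1Dist x y := by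
  obtain ⟨i, hi⟩ := Function.ne_iff.1 hxy
  obtain ⟨c, hc, adj, closer⟩ : ∃ c ∈ Set.uIcc (x i) (y i),
      |c - x i| = 1 ∧ |c - y i| + 1 = |x i - y i| := by
    rcases lt_or_gt_of_ne hi with h | h
    · exact ⟨x i + 1, by rw [Set.mem_uIcc]; lia, by simp, by grind⟩
    · exact ⟨x i - 1, by rw [Set.mem_uIcc]; lia, by simp, by grind⟩
  refine ⟨Function.update x i c, ?_, c1Adj_update adj, ?_⟩
  · rw [Finset.mem_Icc] at hx hy ⊢
    have hc : c ∈ Set.Icc (a i) (b i) :=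
      Set.uIcc_subset_Icc ⟨hx.1 i, hx.2 i⟩ ⟨hy.1 i, hy.2 i⟩ hc
    exact ⟨le_update_iff.2 ⟨hc.1, fun j _ => hx.1 j⟩, update_le_iff.2 ⟨hc.2, fun j _ => hx.2 j⟩⟩
  · linarith [c1Dist_update_add x y i c]

theorem hasC1Path_Icc {m : ℕ} (hx : x ∈ Finset.Icc a b) (hy : y ∈ Finset.Icc a b)
    (h : c1Dist x y ≤ m) : HasC1Path (Finset.Icc a b) m x y := by
  induction m generalizing x with
  | zero =>
    refine hasC1Path_zero_iff.2 ⟨hx, ?_⟩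
    by_contra hxy
    exact h.not_gt (c1Dist_pos hxy)
  | succ m ih =>
    refine hasC1Path_succ_iff.2 ⟨hx, ?_⟩
    by_cases hxy : x = y
    · subst hxy
      exact ⟨x, .inl rfl, ih hx (by simp)⟩
    · obtain ⟨z, hz, adj, closer⟩ := exists_c1Adj_mem_Icc_c1Dist_add_one hx hy hxy
      exact ⟨z, .inr adj, ih hz (by push_cast at h; linarith)⟩

theorem nApproxFix_Icc_iff {f : (Fin n → ℤ) → (Fin n → ℤ)} {k : ℕ} (hx : x ∈ Finset.Icc a b)
    (hfx : f x ∈ Finset.Icc a b) :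
    nApproxFix (Finset.Icc a b) f k x ↔ c1Dist x (f x) ≤ k := by
  rw [nApproxFix_iff_hasC1Path]
  constructor
  · rintro ⟨m, hmk, path⟩
    exact path.c1Dist_le.trans (by exact_mod_cast hmk)
  · exact fun h => ⟨k, le_rfl, hasC1Path_Icc hx hfx h⟩

end Box

section Cube

variable {n : ℕ} {a x : Fin n → ℤ} {D : Finset (Fin n)}

theorem mem_eCube_iff : x ∈ eCube a D ↔ ∀ i, x i = a i ∨ i ∈ D ∧ x i = a i + 1 := by
  simp only [eCube, Finset.mem_image, Finset.mem_powerset]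
  constructor
  · rintro ⟨s, hs, rfl⟩ i
    by_cases hi : i ∈ s
    · exact .inr ⟨hs hi, by simp [hi]⟩
    · exact .inl (by simp [hi])
  · intro h
    refine ⟨Finset.univ.filter fun i => x i = a i + 1, fun i hi => ?_, funext fun i => ?_⟩
    · have hi : x i = a i + 1 := by simpa using hi
      exact (h i).elim (by lia) And.left
    · rcases h i with hi | ⟨-, hi⟩ <;> simp [hi]

theorem eCube_eq_Icc (a : Fin n → ℤ) (D : Finset (Fin n)) :
    eCube a D = Finset.Icc a (fun i => a i + if i ∈ D then 1 else 0) := by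
  ext x
  simp only [mem_eCube_iff, Finset.mem_Icc, Pi.le_def, ← forall_and]
  refine forall_congr' fun i => ?_
  split_ifs with hi <;> simp only [hi, true_and, false_and, or_false] <;> lia

/-- The antipodal map of the elementary cube `eCube a D`, i.e. the point reflection of `ℤ^n` in
the centre of the cube, which exchanges `a i` and `a i + 1` for `i ∈ D`. -/
def antipode (a : Fin n → ℤ) (D : Finset (Fin n)) (x : Fin n → ℤ) (i : Fin n) : ℤ :=
  2 * a i + (if i ∈ D then 1 else 0) - x i

theorem antipode_mem_eCube (hx : x ∈ eCube a D) : antipode a D x ∈ eCube a D := by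
  rw [mem_eCube_iff] at hx ⊢
  intro i
  have := hx i
  grind [antipode]

theorem c1Dist_antipode (hx : x ∈ eCube a D) : c1Dist x (antipode a D x) = D.card := by
  rw [mem_eCube_iff] at hx
  have coord (i : Fin n) : |x i - antipode a D x i| = if i ∈ D then 1 else 0 := by
    have := hx i
    grind [antipode]
  simp [c1Dist, coord]

theorem antipodal_napprox_general {k : ℕ} (hx : x ∈ eCube a D) :
    nApproxFix (eCube a D) (antipode a D) k x ↔ D.card ≤ k := by
  have hfx := antipode_mem_eCube hx
  have hdist := c1Dist_antipode hx
  rw [eCube_eq_Icc] at hx hfx ⊢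
  rw [nApproxFix_Icc_iff hx hfx, hdist, Nat.cast_le]

end Cube

/-- Let `n ≥ 1`, let `X = {0,1}^n ⊆ ℤ^n` with `c1`-adjacency, and let `f` be the antipodal
map `f(t_1,…,t_n) = (1−t_1,…,1−t_n)`. Then every point of `X` is an `n`-approximate fixed
point of `f`, and no point of `X` is a `k`-approximate fixed point of `f` for any `k < n`
(equivalently: every `c1`-path in `X` from `x` to `f x` has length at least `n`, and such
a path of length exactly `n` exists). -/
theorem antipodal_napprox {n : ℕ} (hn : 1 ≤ n) :
    (∀ x ∈ eCube (fun _ => (0 : ℤ)) (Finset.univ : Finset (Fin n)),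
      nApproxFix (eCube (fun _ => (0 : ℤ)) Finset.univ)
        (fun x i => 1 - x i) n x) ∧
    (∀ k < n, ∀ x ∈ eCube (fun _ => (0 : ℤ)) (Finset.univ : Finset (Fin n)),
      ¬ nApproxFix (eCube (fun _ => (0 : ℤ)) Finset.univ)
        (fun x i => 1 - x i) k x) := by
  have antipode_unit : antipode (fun _ : Fin n => 0) Finset.univ = fun x i => 1 - x i := by
    funext x i
    simp [antipode]
  rw [← antipode_unit]
  exact ⟨fun x hx => (antipodal_napprox_general hx).2 (by simp),
    fun k hk x hx h => hk.not_ge (by simpa using (antipodal_napprox_general hx).1 h)⟩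
end

section
/- Let n ≥ 3 and let C_n be the digital cycle on n points. Then for every continuous self-map f : C_n → C_n, the simplicial Lefschetz number satisfies L(f) ∈ {0, 1, 2}. -/
/-- A function `f : (X,κ) → (Y,λ)` between digital images is (digitally) continuous if
whenever `x, y` are `κ`-adjacent, `f x = f y` or `f x, f y` are `λ`-adjacent. -/
def DigCont {X Y : Type*} (κ : X → X → Prop) (lam : Y → Y → Prop) (f : X → Y) : Prop :=
  ∀ x y, κ x y → f x = f y ∨ lam (f x) (f y)

/-- A clique of `(X,κ)`: a nonempty set of mutually `κ`-adjacent points. -/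
def IsClique {X : Type*} (κ : X → X → Prop) (S : Finset X) : Prop :=
  S.Nonempty ∧ ∀ x ∈ S, ∀ y ∈ S, x ≠ y → κ x y

/-- `x` is an approximate fixed point of `f`: `f x = x` or `f x` is adjacent to `x`. -/
def ApproxFix {X : Type*} (κ : X → X → Prop) (f : X → X) (x : X) : Prop :=
  f x = x ∨ κ x (f x)

/-- A strong homotopy between `f, g : (X,κ) → (Y,λ)` is `H : X × {0,…,m} → Y` with
`H(x,0) = f(x)`, `H(x,m) = g(x)`, such that whenever (`x = x′` or `x,x′` are `κ`-adjacent)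
and `|t − t′| ≤ 1`, with `(x,t) ≠ (x′,t′)`, the values `H(x,t), H(x′,t′)` are equal or
`λ`-adjacent.  `f ≃* g` iff such an `H` exists. -/
def StrongHomotopic {X Y : Type*} (κ : X → X → Prop) (lam : Y → Y → Prop)
    (f g : X → Y) : Prop :=
  ∃ (m : ℕ) (H : X → ℕ → Y),
    (∀ x, H x 0 = f x) ∧ (∀ x, H x m = g x) ∧
    ∀ x x' (t t' : ℕ), t ≤ m → t' ≤ m → (x = x' ∨ κ x x') →
      (t = t' ∨ t + 1 = t' ∨ t' + 1 = t) → (x ≠ x' ∨ t ≠ t') →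
      (H x t = H x' t' ∨ lam (H x t) (H x' t'))

/-- The permutation induced by `f` on a finite set `S` with `f(S) = S`. -/
noncomputable def fixedSetPerm {X : Type*} [DecidableEq X] (f : X → X) (S : Finset X)
    (h : S.image f = S) : Equiv.Perm {x // x ∈ S} :=
  Equiv.ofBijective
    (fun x => ⟨f x.1, by
      have hx : f x.1 ∈ S.image f := Finset.mem_image_of_mem f x.2
      rwa [h] at hx⟩)
    (by
      rw [Fintype.bijective_iff_surjective_and_card]
      refine ⟨fun y => ?_, rfl⟩
      have hy : (y : X) ∈ S.image f := by rw [h]; exact y.2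
      obtain ⟨x, hx, hfx⟩ := Finset.mem_image.mp hy
      exact ⟨⟨x, hx⟩, Subtype.ext hfx⟩)

open Classical in
/-- The simplicial Lefschetz number `L(f) = ∑_S (−1)^{|S|−1} sgn(f|_S)`, summing over all
cliques `S` of `(X,κ)` with `f(S) = S`. -/
noncomputable def simpLef {X : Type*} [Fintype X] [DecidableEq X]
    (κ : X → X → Prop) (f : X → X) : ℤ :=
  ∑ S : Finset X,
    if h : IsClique κ S ∧ S.image f = S then
      (-1 : ℤ) ^ (S.card - 1) * ((Equiv.Perm.sign (fixedSetPerm f S h.2) : ℤˣ) : ℤ)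
    else 0

open Classical in
/-- The simplicial Euler characteristic `χ(X) = ∑_{q≥0} (−1)^q s_q`, where `s_q` is the
number of cliques of `X` with exactly `q+1` points; equivalently `∑_S (−1)^{|S|−1}` over
all cliques `S`. -/
noncomputable def simpEuler {X : Type*} [Fintype X] (κ : X → X → Prop) : ℤ :=
  ∑ S : Finset X, if IsClique κ S then (-1 : ℤ) ^ (S.card - 1) else 0

/-- The adjacency relation of the digital cycle `C_n` on `ℤ/nℤ`: `i` and `j` are adjacent
iff `i − j ≡ ±1 (mod n)`. -/
def cycleAdj (n : ℕ) (i j : ZMod n) : Prop := i - j = 1 ∨ j - i = 1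

/-!
Let `M` be the matrix of `v ↦ v ∘ f` on `ℤ^X`. If `f(S) = S`, the sign of `f` on `S` is the
principal minor of `M` on `S`, and the principal minors on all other sets vanish, so `L(f)` is the
signed sum of the principal minors of `M` over all cliques.

If any two points of `X` are adjacent, as in `C_3`, this sum is `1 - det (1 - M)`, and
`det (1 - M) = 0` because `M` fixes the constant vectors; thus `L(f) = 1`.

If `n ≥ 4`, the cliques of `C_n` are the vertices `{i}` and the edges `{i, i + 1}`. Write
`f (i + 1) = f i + e i` with `e i ∈ {-1, 0, 1}`. Going from `i` to `i + 1`, the displacement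
`f i - i` changes by `e i - 1`, and its representative in `[0, n)` wraps around exactly when the
vertex and edge at `i` together contribute `1` to `L(f)`; otherwise they contribute `0`. Summing
around the cycle gives `n * L(f) = n - ∑ i, e i`, which lies between `0` and `2 * n`.
-/

open Finset

section PrincipalMinors

variable {X R : Type*} [DecidableEq X] [CommRing R]

theorem det_one_add_eq_sum_det_submatrix [Fintype X] (M : Matrix X X R) :
    (1 + M).det = ∑ S : Finset X, (M.submatrix (↑) (↑) : Matrix S S R).det := by
  simp_rw [add_comm 1 M, ← Matrix.det_piecewise_one_eq_submatrix_det]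
  exact Matrix.detRowAlternating.map_add_univ M.row (1 : Matrix X X R).row

theorem det_submatrix_pair (M : Matrix X X R) {i j : X} (hij : i ≠ j) :
    (M.submatrix (↑) (↑) : Matrix ({i, j} : Finset X) ({i, j} : Finset X) R).det =
      M i i * M j j - M i j * M j i := by
  let v : Fin 2 → ({i, j} : Finset X) := ![⟨i, by simp⟩, ⟨j, by simp⟩]
  have hv : Function.Bijective v := by
    rw [Fintype.bijective_iff_injective_and_card]
    exact ⟨by simp [v, Function.Injective, Fin.forall_fin_two, hij, hij.symm],
      by simp [card_pair hij]⟩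
  rw [← Matrix.det_submatrix_equiv_self (Equiv.ofBijective v hv), Matrix.det_fin_two]
  simp [v]

end PrincipalMinors

section SimplexIndex

variable {X : Type*} [DecidableEq X]

/-- The matrix of the pullback operator `v ↦ v ∘ f`: row `i` is the unit vector at `f i`. -/
def pullbackMatrix (f : X → X) : Matrix X X ℤ :=
  (1 : Matrix X X ℤ).submatrix f id

/-- The contribution `(−1)^{|S|−1} det M_S` of the simplex `S` to the Lefschetz number of `f`,
where `M_S` is the principal submatrix on `S` of `pullbackMatrix f`. It vanishes when
`f(S) ≠ S`. Truncated subtraction makes it `1` at `S = ∅`, which is not a simplex. -/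
def simplexIndex (f : X → X) (S : Finset X) : ℤ :=
  (-1) ^ (#S - 1) * ((pullbackMatrix f).submatrix (↑) (↑) : Matrix S S ℤ).det

theorem pullbackMatrix_apply (f : X → X) (i j : X) :
    pullbackMatrix f i j = if f i = j then 1 else 0 := rfl

theorem pullbackMatrix_mulVec [Fintype X] (f : X → X) (v : X → ℤ) :
    (pullbackMatrix f).mulVec v = v ∘ f := by
  ext i
  simp [Matrix.mulVec, dotProduct, pullbackMatrix_apply]

theorem det_one_sub_pullbackMatrix [Fintype X] [Nonempty X] (f : X → X) :
    (1 - pullbackMatrix f).det = 0 := by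
  refine Matrix.exists_mulVec_eq_zero_iff.mp ⟨1, one_ne_zero, ?_⟩
  rw [Matrix.sub_mulVec, Matrix.one_mulVec, pullbackMatrix_mulVec, Pi.one_comp, sub_self]

theorem det_submatrix_pullbackMatrix_of_image_eq {f : X → X} {S : Finset X} (h : S.image f = S) :
    ((pullbackMatrix f).submatrix (↑) (↑) : Matrix S S ℤ).det =
      Equiv.Perm.sign (fixedSetPerm f S h) := by
  rw [← Int.cast_id (n := (Equiv.Perm.sign (fixedSetPerm f S h) : ℤ)), ← Matrix.det_permutation]
  congr 1
  ext i j
  simp [pullbackMatrix_apply, PEquiv.toMatrix_apply, fixedSetPerm, Subtype.ext_iff, eq_comm]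

theorem det_submatrix_pullbackMatrix_of_image_ne {f : X → X} {S : Finset X} (h : S.image f ≠ S) :
    ((pullbackMatrix f).submatrix (↑) (↑) : Matrix S S ℤ).det = 0 := by
  by_cases hS : S.image f ⊆ S
  · have hcard : #(S.image f) < #S := card_lt_card (hS.ssubset_of_ne h)
    obtain ⟨i, hi, j, hj, hij, hfij⟩ := exists_ne_map_eq_of_card_image_lt hcard
    refine Matrix.det_zero_of_row_eq (i := ⟨i, hi⟩) (j := ⟨j, hj⟩) (by simpa using hij) ?_
    ext k
    simp only [Matrix.submatrix_apply, pullbackMatrix_apply, hfij]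
  · obtain ⟨i, hi, hfi⟩ : ∃ i ∈ S, f i ∉ S := by simpa [image_subset_iff] using hS
    refine Matrix.det_eq_zero_of_row_eq_zero ⟨i, hi⟩ fun k ↦ ?_
    rw [Matrix.submatrix_apply, pullbackMatrix_apply, if_neg]
    exact fun hk ↦ hfi (hk ▸ k.2)

open Classical in
theorem simpLef_eq_sum_simplexIndex [Fintype X] (κ : X → X → Prop) (f : X → X) :
    simpLef κ f = ∑ S with IsClique κ S, simplexIndex f S := by
  rw [simpLef, sum_filter]
  refine sum_congr rfl fun S _ ↦ ?_
  by_cases hκ : IsClique κ S <;> by_cases hS : S.image f = S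
  · simp [hκ, hS, simplexIndex, det_submatrix_pullbackMatrix_of_image_eq]
  · simp [hκ, hS, simplexIndex, det_submatrix_pullbackMatrix_of_image_ne]
  all_goals simp [hκ]

theorem simplexIndex_singleton (f : X → X) (i : X) :
    simplexIndex f {i} = if f i = i then 1 else 0 := by
  simp [simplexIndex, Matrix.det_unique, pullbackMatrix_apply]

theorem simplexIndex_pair (f : X → X) {i j : X} (hij : i ≠ j) :
    simplexIndex f {i, j} =
      (if f i = j ∧ f j = i then 1 else 0) - if f i = i ∧ f j = j then 1 else 0 := by
  simp [simplexIndex, det_submatrix_pair _ hij, card_pair hij, pullbackMatrix_apply,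
    ← ite_and, and_comm]

theorem simpLef_eq_one_of_complete [Fintype X] [Nonempty X] {κ : X → X → Prop}
    (hκ : ∀ x y, x ≠ y → κ x y) (f : X → X) : simpLef κ f = 1 := by
  classical
  have hclique (S : Finset X) : IsClique κ S ↔ S ≠ ∅ := by
    rw [← nonempty_iff_ne_empty]
    exact ⟨And.left, fun hS ↦ ⟨hS, fun x _ y _ ↦ hκ x y⟩⟩
  have hminor (S : Finset X) (hS : S ≠ ∅) : simplexIndex f S =
      -((-pullbackMatrix f).submatrix (↑) (↑) : Matrix S S ℤ).det := by
    obtain ⟨k, hk⟩ := Nat.exists_eq_succ_of_ne_zero (card_eq_zero.not.mpr hS)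
    simp [simplexIndex, Matrix.submatrix_neg, Matrix.det_neg, hk, pow_succ]
  have hsum := det_one_add_eq_sum_det_submatrix (-pullbackMatrix f)
  rw [← sub_eq_add_neg, det_one_sub_pullbackMatrix, ← add_sum_erase _ _ (mem_univ ∅),
    Matrix.det_isEmpty] at hsum
  simp only [simpLef_eq_sum_simplexIndex, hclique, filter_ne']
  rw [sum_congr rfl fun S hS ↦ hminor S (ne_of_mem_erase hS), sum_neg_distrib]
  linarith

end SimplexIndex

section Clique

variable {X : Type*} {κ : X → X → Prop}

theorem isClique_singleton (i : X) : IsClique κ {i} := by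
  simp [IsClique]

theorem isClique_pair [DecidableEq X] {i j : X} (hij : κ i j) (hji : κ j i) :
    IsClique κ {i, j} := by
  simp [IsClique, hij, hji]

end Clique

section Cycle

variable {n : ℕ}

theorem intCast_zmod_eq_zero_iff_of_abs_lt {e : ℤ} (he : |e| < n) : (e : ZMod n) = 0 ↔ e = 0 := by
  rw [ZMod.intCast_zmod_eq_zero_iff_dvd]
  exact ⟨fun h ↦ Int.eq_zero_of_abs_lt_dvd h he, fun h ↦ h ▸ dvd_zero _⟩

theorem cycleAdj_add_one (i : ZMod n) : cycleAdj n i (i + 1) :=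
  Or.inr (add_sub_cancel_left i 1)

theorem cycleAdj_comm {i j : ZMod n} : cycleAdj n i j ↔ cycleAdj n j i :=
  or_comm

theorem cycleAdj_iff {i j : ZMod n} : cycleAdj n i j ↔ j = i + 1 ∨ i = j + 1 := by
  rw [cycleAdj, sub_eq_iff_eq_add', sub_eq_iff_eq_add', or_comm, add_comm j, add_comm i]

theorem DigCont.exists_step {f : ZMod n → ZMod n} (hf : DigCont (cycleAdj n) (cycleAdj n) f) :
    ∃ e : ZMod n → ℤ, ∀ i, |e i| ≤ 1 ∧ f (i + 1) = f i + e i := by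
  suffices ∀ i, ∃ e : ℤ, |e| ≤ 1 ∧ f (i + 1) = f i + e from Classical.skolem.mp this
  intro i
  rcases hf i (i + 1) (cycleAdj_add_one i) with h | h
  · exact ⟨0, by simp [h]⟩
  · rcases cycleAdj_iff.mp h with h | h
    · exact ⟨1, by simp [h]⟩
    · exact ⟨-1, by simp [h]⟩

theorem not_cycleAdj_add_one_of_cycleAdj (hn : 4 ≤ n) {i j : ZMod n} (h : cycleAdj n i j) :
    ¬ cycleAdj n (i + 1) j := by
  have one_ne : (1 : ZMod n) ≠ 0 := by
    simpa using (intCast_zmod_eq_zero_iff_of_abs_lt (n := n) (e := 1) (by grind)).not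
  have three_ne : (3 : ZMod n) ≠ 0 := by
    simpa using (intCast_zmod_eq_zero_iff_of_abs_lt (n := n) (e := 3) (by grind)).not
  rw [cycleAdj_iff] at h ⊢
  grind

theorem isClique_cycleAdj_iff (hn : 4 ≤ n) {S : Finset (ZMod n)} :
    IsClique (cycleAdj n) S ↔ (∃ i, {i} = S) ∨ ∃ i, {i, i + 1} = S := by
  constructor
  · rintro ⟨⟨x, hx⟩, hS⟩
    have eq_edge {i : ZMod n} (hi : i ∈ S) (hi' : i + 1 ∈ S) : {i, i + 1} = S := by
      refine Subset.antisymm (by simp [insert_subset_iff, hi, hi']) fun j hj ↦ ?_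
      rw [mem_insert, mem_singleton]
      by_contra! hne
      exact not_cycleAdj_add_one_of_cycleAdj hn (hS i hi j hj hne.1.symm)
        (hS _ hi' j hj hne.2.symm)
    by_cases hy : ∃ y ∈ S, y ≠ x
    · obtain ⟨y, hy, hyx⟩ := hy
      rcases cycleAdj_iff.mp (hS y hy x hx hyx) with rfl | rfl
      · exact .inr ⟨y, eq_edge hy hx⟩
      · exact .inr ⟨x, eq_edge hx hy⟩
    · push Not at hy
      exact .inl ⟨x, (eq_singleton_iff_unique_mem.mpr ⟨hx, hy⟩).symm⟩
  · rintro (⟨i, rfl⟩ | ⟨i, rfl⟩)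
    · exact isClique_singleton i
    · exact isClique_pair (cycleAdj_add_one i) (cycleAdj_comm.mp (cycleAdj_add_one i))

theorem pair_add_one_injective (hn : 3 ≤ n) :
    Function.Injective fun i : ZMod n ↦ ({i, i + 1} : Finset (ZMod n)) := by
  have two_ne : (2 : ZMod n) ≠ 0 := by
    simpa using (intCast_zmod_eq_zero_iff_of_abs_lt (n := n) (e := 2) (by grind)).not
  intro i j (hij : ({i, i + 1} : Finset (ZMod n)) = {j, j + 1})
  have hi : i ∈ ({j, j + 1} : Finset (ZMod n)) := hij ▸ mem_insert_self _ _
  have hj : j ∈ ({i, i + 1} : Finset (ZMod n)) := hij ▸ mem_insert_self _ _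
  grind

open Classical in
theorem sum_isClique_cycleAdj [NeZero n] (hn : 4 ≤ n) {A : Type*} [AddCommMonoid A]
    (w : Finset (ZMod n) → A) :
    ∑ S with IsClique (cycleAdj n) S, w S = ∑ i, (w {i} + w {i, i + 1}) := by
  have : Fact (1 < n) := ⟨by lia⟩
  have hdisj : Disjoint (univ.image fun i : ZMod n ↦ ({i} : Finset (ZMod n)))
      (univ.image fun i : ZMod n ↦ {i, i + 1}) := by
    simp only [disjoint_left, mem_image, mem_univ, true_and]
    rintro _ ⟨i, rfl⟩ ⟨j, hj⟩
    simpa using congrArg card hj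
  have hcliques : ({S | IsClique (cycleAdj n) S} : Finset (Finset (ZMod n))) =
      (univ.image fun i ↦ {i}) ∪ univ.image fun i ↦ {i, i + 1} := by
    ext S
    simp [isClique_cycleAdj_iff hn]
  rw [hcliques, sum_union hdisj, sum_image singleton_injective.injOn,
    sum_image (pair_add_one_injective (by lia)).injOn, sum_add_distrib]

theorem val_add_intCast_sub_one (hn : 2 ≤ n) (x : ZMod n) {e : ℤ} (he : |e| ≤ 1) :
    ((x + e - 1).val : ℤ) = x.val + (e - 1) + n * if x.val + e < 1 then 1 else 0 := by
  have : NeZero n := ⟨by lia⟩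
  have hx : x + e - 1 = ((x.val + (e - 1) : ℤ) : ZMod n) := by
    push_cast
    rw [ZMod.natCast_zmod_val]
    ring
  have hlt := x.val_lt
  rw [abs_le] at he
  rw [hx, ZMod.val_intCast]
  split_ifs
  · rw [← Int.add_emod_right, Int.emod_eq_of_lt] <;> lia
  · rw [Int.emod_eq_of_lt] <;> lia

theorem simplexIndex_vertex_add_edge (hn : 3 ≤ n) {f : ZMod n → ZMod n} {i : ZMod n} {e : ℤ}
    (he : |e| ≤ 1) (hf : f (i + 1) = f i + e) :
    simplexIndex f {i} + simplexIndex f {i, i + 1} =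
      if (f i - i).val + e < 1 then 1 else 0 := by
  have : Fact (1 < n) := ⟨by lia⟩
  have fixed_iff : f i = i ↔ (f i - i).val = 0 := by rw [ZMod.val_eq_zero, sub_eq_zero]
  have shift_iff : f i = i + 1 ↔ (f i - i).val = 1 := by
    rw [ZMod.val_eq_one Fact.out, sub_eq_iff_eq_add']
  have edge_fixed_iff : f i = i ∧ f (i + 1) = i + 1 ↔ (f i - i).val = 0 ∧ e = 1 := by
    rw [← fixed_iff, ← sub_eq_zero (a := e),
      ← intCast_zmod_eq_zero_iff_of_abs_lt (n := n) (by grind), Int.cast_sub, Int.cast_one, hf]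
    grind
  have edge_swap_iff : f i = i + 1 ∧ f (i + 1) = i ↔ (f i - i).val = 1 ∧ e = -1 := by
    rw [← shift_iff, ← add_eq_zero_iff_eq_neg,
      ← intCast_zmod_eq_zero_iff_of_abs_lt (n := n) (by grind), Int.cast_add, Int.cast_one, hf]
    grind
  rw [simplexIndex_singleton, simplexIndex_pair f (by simp)]
  simp only [edge_fixed_iff, edge_swap_iff]
  simp only [fixed_iff]
  grind

theorem natCast_mul_simpLef_cycleAdj [NeZero n] (hn : 4 ≤ n) {f : ZMod n → ZMod n}
    {e : ZMod n → ℤ} (he : ∀ i, |e i| ≤ 1) (hf : ∀ i, f (i + 1) = f i + e i) :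
    n * simpLef (cycleAdj n) f = n - ∑ i, e i := by
  have hlocal (i : ZMod n) : n * (simplexIndex f {i} + simplexIndex f {i, i + 1}) =
      ((f (i + 1) - (i + 1)).val - (f i - i).val : ℤ) + (1 - e i) := by
    have hdisp : f (i + 1) - (i + 1) = f i - i + e i - 1 := by rw [hf]; ring
    rw [simplexIndex_vertex_add_edge (by lia) (he i) (hf i), hdisp,
      val_add_intCast_sub_one (by lia) _ (he i)]
    ring
  have htelescope : ∑ i : ZMod n, ((f (i + 1) - (i + 1)).val - (f i - i).val : ℤ) = 0 := by
    rw [sum_sub_distrib, sub_eq_zero]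
    exact Equiv.sum_comp (Equiv.addRight 1) fun i ↦ ((f i - i).val : ℤ)
  calc n * simpLef (cycleAdj n) f
      = ∑ i, n * (simplexIndex f {i} + simplexIndex f {i, i + 1}) := by
        rw [simpLef_eq_sum_simplexIndex, sum_isClique_cycleAdj hn, mul_sum]
    _ = ∑ i, (1 - e i) := by
        rw [sum_congr rfl fun i _ ↦ hlocal i, sum_add_distrib, htelescope, zero_add]
    _ = n - ∑ i, e i := by simp [ZMod.card]

end Cycle

/-- Let `n ≥ 3` and let `C_n` be the digital cycle on `n` points. Then for every
continuous self-map `f : C_n → C_n`, the simplicial Lefschetz number satisfies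
`L(f) ∈ {0, 1, 2}`. -/
theorem simpLef_cycle_mem {n : ℕ} [NeZero n] (hn : 3 ≤ n)
    (f : ZMod n → ZMod n) (hf : DigCont (cycleAdj n) (cycleAdj n) f) :
    simpLef (cycleAdj n) f ∈ ({0, 1, 2} : Set ℤ) := by
  obtain rfl | hn4 := hn.eq_or_lt
  · have hL : simpLef (cycleAdj 3) f = 1 :=
      simpLef_eq_one_of_complete (by unfold cycleAdj; decide) f
    simp [hL]
  · obtain ⟨e, he⟩ := hf.exists_step
    have hL := natCast_mul_simpLef_cycleAdj hn4 (fun i ↦ (he i).1) fun i ↦ (he i).2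
    have hsum : |∑ i, e i| ≤ n :=
      calc |∑ i, e i| ≤ ∑ i, |e i| := abs_sum_le_sum_abs e univ
        _ ≤ ∑ _i : ZMod n, 1 := sum_le_sum fun i _ ↦ (he i).1
        _ = n := by simp [ZMod.card]
    rw [abs_le] at hsum
    have hlower : 0 ≤ simpLef (cycleAdj n) f := by nlinarith
    have hupper : simpLef (cycleAdj n) f ≤ 2 := by nlinarith
    simp only [Set.mem_insert_iff, Set.mem_singleton_iff]
    lia
end
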